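/- arXiv:1603.09218 — 2 statements merged into one kernel-verified Lean document; each statement's English description precedes it below -/
import Mathlib

section
/- The elements c₁ := tr_q(A) = a¹₁ + q⁻²a²₂, c₂ := det_q(A), d₁ := tr_q(D) = ∂¹₁ + q⁻²∂²₂, d₂ := det_q(D), r := q²·tr_q(DA) and w := tr_q(DÃD̃A) of 𝒟q(GL₂), with c₂ and d₂ invertible there, satisfy all sixteen defining relations of ℬ; consequently there is a ℂ-algebra homomorphism Ψ̄: ℬ → 𝒟q(GL₂) sending the generators c₁, c₂, d₁, d₂, r, w to these elements. -/
noncomputable section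

/-- Generators `a¹₁, a¹₂, a²₁, a²₂, ∂¹₁, ∂¹₂, ∂²₁, ∂²₂` of the algebra
`𝒟q⁺(GL₂)` of quantum differential operators. -/
inductive QLGen : Type
  | a11 | a12 | a21 | a22 | p11 | p12 | p21 | p22 | ai | di

abbrev FQL : Type := FreeAlgebra ℂ QLGen

def gQL : QLGen → FQL := FreeAlgebra.ι ℂ

/-- The defining relations of `𝒟q⁺(GL₂)`. -/
inductive QLRel (q : ℂ) : FQL → FQL → Prop
  -- the six `a`-relations
  | a1 : QLRel q (gQL .a12 * gQL .a11)
      (gQL .a11 * gQL .a12 + (1 - q⁻¹ ^ 2) • (gQL .a12 * gQL .a22))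
  | a2 : QLRel q (gQL .a22 * gQL .a11) (gQL .a11 * gQL .a22)
  | a3 : QLRel q (gQL .a21 * gQL .a11)
      (gQL .a11 * gQL .a21 - (1 - q⁻¹ ^ 2) • (gQL .a22 * gQL .a21))
  | a4 : QLRel q (gQL .a22 * gQL .a12) ((q ^ 2) • (gQL .a12 * gQL .a22))
  | a5 : QLRel q (gQL .a21 * gQL .a12)
      (gQL .a12 * gQL .a21 + (1 - q⁻¹ ^ 2) • (gQL .a11 * gQL .a22 - gQL .a22 * gQL .a22))
  | a6 : QLRel q (gQL .a22 * gQL .a21) ((q⁻¹ ^ 2) • (gQL .a21 * gQL .a22))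
  -- the six `∂`-relations
  | p1 : QLRel q (gQL .p12 * gQL .p11)
      (gQL .p11 * gQL .p12 + (1 - q⁻¹ ^ 2) • (gQL .p12 * gQL .p22))
  | p2 : QLRel q (gQL .p22 * gQL .p11) (gQL .p11 * gQL .p22)
  | p3 : QLRel q (gQL .p21 * gQL .p11)
      (gQL .p11 * gQL .p21 - (1 - q⁻¹ ^ 2) • (gQL .p22 * gQL .p21))
  | p4 : QLRel q (gQL .p22 * gQL .p12) ((q ^ 2) • (gQL .p12 * gQL .p22))
  | p5 : QLRel q (gQL .p21 * gQL .p12)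
      (gQL .p12 * gQL .p21 + (1 - q⁻¹ ^ 2) • (gQL .p11 * gQL .p22 - gQL .p22 * gQL .p22))
  | p6 : QLRel q (gQL .p22 * gQL .p21) ((q⁻¹ ^ 2) • (gQL .p21 * gQL .p22))
  -- the sixteen cross relations
  | c1 : QLRel q (gQL .p11 * gQL .a11)
      (-((1 - q⁻¹ ^ 2) • (gQL .p12 * gQL .a21)) + (q⁻¹ ^ 2) • (gQL .a11 * gQL .p11)
        + (q⁻¹ ^ 2 - q⁻¹ ^ 4) • (gQL .a12 * gQL .p21))
  | c2 : QLRel q (gQL .p11 * gQL .a12)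
      ((q⁻¹ ^ 2 - 1) • (gQL .p12 * gQL .a22) + (q⁻¹ ^ 2) • (gQL .a12 * gQL .p11))
  | c3 : QLRel q (gQL .p11 * gQL .a21)
      ((1 - q ^ 2) • (gQL .p21 * gQL .a11) - ((q - q⁻¹) ^ 2) • (gQL .p22 * gQL .a21)
        + gQL .a21 * gQL .p11 + (1 - q⁻¹ ^ 2) • (gQL .a22 * gQL .p21))
  | c4 : QLRel q (gQL .p11 * gQL .a22)
      ((1 - q ^ 2) • (gQL .p21 * gQL .a12) - ((q - q⁻¹) ^ 2) • (gQL .p22 * gQL .a22)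
        + gQL .a22 * gQL .p11)
  | c5 : QLRel q (gQL .p12 * gQL .a11)
      (gQL .a11 * gQL .p12 + (1 - q⁻¹ ^ 2) • (gQL .a12 * gQL .p22)
        + (q⁻¹ ^ 2 - 1) • (gQL .a12 * gQL .p11))
  | c6 : QLRel q (gQL .p12 * gQL .a12) ((q⁻¹ ^ 2) • (gQL .a12 * gQL .p12))
  | c7 : QLRel q (gQL .p12 * gQL .a21)
      ((q⁻¹ ^ 2 - 1) • (gQL .p22 * gQL .a11) + gQL .a21 * gQL .p12
        + (q⁻¹ ^ 2 - 1) • (gQL .a22 * gQL .p11) + (1 - q⁻¹ ^ 2) • (gQL .a22 * gQL .p22))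
  | c8 : QLRel q (gQL .p12 * gQL .a22)
      ((q⁻¹ ^ 2 - 1) • (gQL .p22 * gQL .a12) + (q⁻¹ ^ 2) • (gQL .a22 * gQL .p12))
  | c9 : QLRel q (gQL .p21 * gQL .a11)
      ((q⁻¹ ^ 2) • (gQL .a11 * gQL .p21) - (1 - q⁻¹ ^ 2) • (gQL .p22 * gQL .a21))
  | c10 : QLRel q (gQL .p21 * gQL .a12)
      ((q⁻¹ ^ 2 - 1) • (gQL .p22 * gQL .a22) + gQL .a12 * gQL .p21)
  | c11 : QLRel q (gQL .p21 * gQL .a21) ((q⁻¹ ^ 2) • (gQL .a21 * gQL .p21))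
  | c12 : QLRel q (gQL .p21 * gQL .a22) (gQL .a22 * gQL .p21)
  | c13 : QLRel q (gQL .p22 * gQL .a11)
      (gQL .a11 * gQL .p22 + (1 - q ^ 2) • (gQL .a12 * gQL .p21))
  | c14 : QLRel q (gQL .p22 * gQL .a12) (gQL .a12 * gQL .p22)
  | c15 : QLRel q (gQL .p22 * gQL .a21)
      ((q⁻¹ ^ 2) • (gQL .a21 * gQL .p22) + (q⁻¹ ^ 2 - 1) • (gQL .a22 * gQL .p21))
  | c16 : QLRel q (gQL .p22 * gQL .a22) ((q⁻¹ ^ 2) • (gQL .a22 * gQL .p22))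

  -- the localization relations: `ai` and `di` are two-sided inverses of
  -- `det_q(A)` and `det_q(D)` respectively
  | invA1 : QLRel q (gQL .ai * (gQL .a11 * gQL .a22 - (q ^ 2) • (gQL .a12 * gQL .a21))) 1
  | invA2 : QLRel q ((gQL .a11 * gQL .a22 - (q ^ 2) • (gQL .a12 * gQL .a21)) * gQL .ai) 1
  | invD1 : QLRel q (gQL .di * (gQL .p11 * gQL .p22 - (q ^ 2) • (gQL .p12 * gQL .p21))) 1
  | invD2 : QLRel q ((gQL .p11 * gQL .p22 - (q ^ 2) • (gQL .p12 * gQL .p21)) * gQL .di) 1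

/-- The algebra `𝒟q⁺(GL₂)` of quantum differential operators on `GL₂`. -/
abbrev DqLoc (q : ℂ) : Type := RingQuot (QLRel q)

def a11 (q : ℂ) : DqLoc q := RingQuot.mkAlgHom ℂ (QLRel q) (gQL .a11)
def a12 (q : ℂ) : DqLoc q := RingQuot.mkAlgHom ℂ (QLRel q) (gQL .a12)
def a21 (q : ℂ) : DqLoc q := RingQuot.mkAlgHom ℂ (QLRel q) (gQL .a21)
def a22 (q : ℂ) : DqLoc q := RingQuot.mkAlgHom ℂ (QLRel q) (gQL .a22)
def p11 (q : ℂ) : DqLoc q := RingQuot.mkAlgHom ℂ (QLRel q) (gQL .p11)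
def p12 (q : ℂ) : DqLoc q := RingQuot.mkAlgHom ℂ (QLRel q) (gQL .p12)
def p21 (q : ℂ) : DqLoc q := RingQuot.mkAlgHom ℂ (QLRel q) (gQL .p21)
def p22 (q : ℂ) : DqLoc q := RingQuot.mkAlgHom ℂ (QLRel q) (gQL .p22)

/-- The quantum determinant `det_q(A) = a¹₁a²₂ − q²a¹₂a²₁`. -/
def detA (q : ℂ) : DqLoc q := a11 q * a22 q - (q ^ 2) • (a12 q * a21 q)

/-- The quantum determinant `det_q(D) = ∂¹₁∂²₂ − q²∂¹₂∂²₁`. -/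
def detD (q : ℂ) : DqLoc q := p11 q * p22 q - (q ^ 2) • (p12 q * p21 q)

/-- The inverse `det_q(A)⁻¹`. -/
def ai (q : ℂ) : DqLoc q := RingQuot.mkAlgHom ℂ (QLRel q) (gQL .ai)

/-- The inverse `det_q(D)⁻¹`. -/
def di (q : ℂ) : DqLoc q := RingQuot.mkAlgHom ℂ (QLRel q) (gQL .di)

/-- The matrix `A = (a^i_j)`. -/
def Amat (q : ℂ) : Matrix (Fin 2) (Fin 2) (DqLoc q) :=
  !![a11 q, a12 q; a21 q, a22 q]

/-- The matrix `D = (∂^i_j)`. -/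
def Dmat (q : ℂ) : Matrix (Fin 2) (Fin 2) (DqLoc q) :=
  !![p11 q, p12 q; p21 q, p22 q]

/-- The quantum adjugate matrix `Ã = [[a²₂, −q²a¹₂], [−q²a²₁, q²a¹₁ + (1−q²)a²₂]]`. -/
def Atil (q : ℂ) : Matrix (Fin 2) (Fin 2) (DqLoc q) :=
  !![a22 q, -((q ^ 2) • a12 q); -((q ^ 2) • a21 q), (q ^ 2) • a11 q + (1 - q ^ 2) • a22 q]

/-- The quantum adjugate matrix `D̃ = [[∂²₂, −q²∂¹₂], [−q²∂²₁, q²∂¹₁ + (1−q²)∂²₂]]`. -/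
def Dtil (q : ℂ) : Matrix (Fin 2) (Fin 2) (DqLoc q) :=
  !![p22 q, -((q ^ 2) • p12 q); -((q ^ 2) • p21 q), (q ^ 2) • p11 q + (1 - q ^ 2) • p22 q]

/-- The inverse matrix `A⁻¹ = det_q(A)⁻¹·Ã`. -/
def Ainv (q : ℂ) : Matrix (Fin 2) (Fin 2) (DqLoc q) := fun i j => ai q * Atil q i j

/-- The inverse matrix `D⁻¹ = det_q(D)⁻¹·D̃`. -/
def Dinv (q : ℂ) : Matrix (Fin 2) (Fin 2) (DqLoc q) := fun i j => di q * Dtil q i j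

/-- Generators of the algebra `ℬ`: `c₁, c₂, c₂⁻¹, d₁, d₂, d₂⁻¹, r, w`. -/
inductive BGen : Type
  | c1 | c2 | c2i | d1 | d2 | d2i | r | w

abbrev FB : Type := FreeAlgebra ℂ BGen

def gB : BGen → FB := FreeAlgebra.ι ℂ

/-- The defining relations of the algebra `ℬ`. -/
inductive BRel (q : ℂ) : FB → FB → Prop
  | c2c2i : BRel q (gB .c2 * gB .c2i) 1
  | c2ic2 : BRel q (gB .c2i * gB .c2) 1
  | d2d2i : BRel q (gB .d2 * gB .d2i) 1
  | d2id2 : BRel q (gB .d2i * gB .d2) 1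
  | c2c1 : BRel q (gB .c2 * gB .c1) (gB .c1 * gB .c2)
  | d2d1 : BRel q (gB .d2 * gB .d1) (gB .d1 * gB .d2)
  | d2c2 : BRel q (gB .d2 * gB .c2) ((q⁻¹ ^ 4) • (gB .c2 * gB .d2))
  | d2c1 : BRel q (gB .d2 * gB .c1) ((q⁻¹ ^ 2) • (gB .c1 * gB .d2))
  | d1c2 : BRel q (gB .d1 * gB .c2) ((q⁻¹ ^ 2) • (gB .c2 * gB .d1))
  | d1c1 : BRel q (gB .d1 * gB .c1) (gB .c1 * gB .d1 + (q⁻¹ ^ 2 - 1) • gB .r)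
  | d2r : BRel q (gB .d2 * gB .r) ((q⁻¹ ^ 2) • (gB .r * gB .d2))
  | rc2 : BRel q (gB .r * gB .c2) ((q⁻¹ ^ 2) • (gB .c2 * gB .r))
  | d1r : BRel q (gB .d1 * gB .r)
      ((q⁻¹ ^ 2) • (gB .r * gB .d1) + ((1 - q⁻¹ ^ 2) * q⁻¹ ^ 2) • (gB .c1 * gB .d2))
  | rc1 : BRel q (gB .r * gB .c1)
      ((q⁻¹ ^ 2) • (gB .c1 * gB .r) + ((1 - q⁻¹ ^ 2) * q⁻¹ ^ 2) • (gB .c2 * gB .d1))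
  | rr : BRel q (gB .r * gB .r)
      ((q⁻¹ ^ 4) • gB .w + (q⁻¹ ^ 4 + q⁻¹ ^ 6) • (gB .c2 * gB .d2)
        - (q⁻¹ ^ 4) • (gB .c2 * gB .d1 * gB .d1)
        - (q⁻¹ ^ 4) • (gB .c1 * gB .c1 * gB .d2)
        + (q⁻¹ ^ 2) • (gB .c1 * gB .r * gB .d1))
  | wr : BRel q (gB .w * gB .r) (gB .r * gB .w)
  | wc1 : BRel q (gB .w * gB .c1) ((q⁻¹ ^ 2) • (gB .c1 * gB .w))
  | wc2 : BRel q (gB .w * gB .c2) ((q⁻¹ ^ 4) • (gB .c2 * gB .w))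
  | wd1 : BRel q (gB .w * gB .d1) ((q ^ 2) • (gB .d1 * gB .w))
  | wd2 : BRel q (gB .w * gB .d2) ((q ^ 4) • (gB .d2 * gB .w))

/-- The algebra `ℬ`. -/
abbrev AlgB (q : ℂ) : Type := RingQuot (BRel q)

def bc1 (q : ℂ) : AlgB q := RingQuot.mkAlgHom ℂ (BRel q) (gB .c1)
def bc2 (q : ℂ) : AlgB q := RingQuot.mkAlgHom ℂ (BRel q) (gB .c2)
def bc2i (q : ℂ) : AlgB q := RingQuot.mkAlgHom ℂ (BRel q) (gB .c2i)
def bd1 (q : ℂ) : AlgB q := RingQuot.mkAlgHom ℂ (BRel q) (gB .d1)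
def bd2 (q : ℂ) : AlgB q := RingQuot.mkAlgHom ℂ (BRel q) (gB .d2)
def bd2i (q : ℂ) : AlgB q := RingQuot.mkAlgHom ℂ (BRel q) (gB .d2i)
def br (q : ℂ) : AlgB q := RingQuot.mkAlgHom ℂ (BRel q) (gB .r)
def bw (q : ℂ) : AlgB q := RingQuot.mkAlgHom ℂ (BRel q) (gB .w)

/-- `c₁ := tr_q(A) = a¹₁ + q⁻²a²₂`. -/
def c1El (q : ℂ) : DqLoc q := a11 q + (q⁻¹ ^ 2) • a22 q
/-- `c₂ := det_q(A)`. -/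
def c2El (q : ℂ) : DqLoc q := detA q
/-- `d₁ := tr_q(D) = ∂¹₁ + q⁻²∂²₂`. -/
def d1El (q : ℂ) : DqLoc q := p11 q + (q⁻¹ ^ 2) • p22 q
/-- `d₂ := det_q(D)`. -/
def d2El (q : ℂ) : DqLoc q := detD q
/-- `r := q²·tr_q(DA)`. -/
def rEl (q : ℂ) : DqLoc q :=
  (q ^ 2) • ((Dmat q * Amat q) 0 0 + (q⁻¹ ^ 2) • (Dmat q * Amat q) 1 1)
/-- `w := tr_q(DÃD̃A)`. -/
def wEl (q : ℂ) : DqLoc q :=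
  (Dmat q * Atil q * Dtil q * Amat q) 0 0
    + (q⁻¹ ^ 2) • (Dmat q * Atil q * Dtil q * Amat q) 1 1

/-
The relations of `𝒟q⁺(GL₂)` are used through matrix identities with scalar matrices in place of
the quantum traces and determinants:
* for a reflection matrix `A`, `tr_q(A)` commutes with `A`, and `A Ã = Ã A = det_q(A)` with
  `Ã = q²(tr_q(A) - A)`, so that `A` satisfies a Cayley–Hamilton identity and commutes with
  `det_q(A)`;
* across the pair, `D tr_q(A) = tr_q(A) D + (1 - q²) DA`, `D det_q(A) = q⁻² det_q(A) D` and
  `tr_q(DA) - DA = q⁻⁶ Ã D̃`.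
Transposing matrices into the opposite algebra exchanges `A` and `D` and preserves all relations,
so each identity about `tr_q(D)` or `det_q(D)` is the dual of one about `tr_q(A)` or `det_q(A)`.
Applying `tr_q` to the matrix identities yields the relations of `ℬ`. In the relation for `wc₁`,
moving `tr_q(A)` through `D̃` gives `(tr_q(A) + (q⁻⁴ - q⁻²) Ã) D̃`, and `DÃ` absorbs the correction.
Finally the formula for `r²` expresses `w` through the other generators, whence `wr = rw`.
-/

open Matrix MulOpposite

namespace QuantumGL2

variable {K R : Type*} [CommRing K] [Ring R] [Algebra K R]

/-- The quantum trace `tr_q(M) = M₁₁ + q⁻²M₂₂` of a `2 × 2` matrix, with `u` standing for `q⁻²`. -/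
def qTrace (u : K) : Matrix (Fin 2) (Fin 2) R →ₗ[K] R :=
  entryLinearMap K R 0 0 + u • entryLinearMap K R 1 1

/-- The quantum determinant `M₁₁M₂₂ − q²M₁₂M₂₁`, with `v` standing for `q²`. -/
def qDet (v : K) (M : Matrix (Fin 2) (Fin 2) R) : R :=
  M 0 0 * M 1 1 - v • (M 0 1 * M 1 0)

/-- The quantum adjugate `q²(tr_q(M) − M)`, with `u`, `v` standing for `q⁻²`, `q²`. -/
def qAdjugate (u v : K) (M : Matrix (Fin 2) (Fin 2) R) : Matrix (Fin 2) (Fin 2) R :=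
  v • (scalar (Fin 2) (qTrace u M) - M)

theorem qTrace_apply (u : K) (M : Matrix (Fin 2) (Fin 2) R) :
    qTrace u M = M 0 0 + u • M 1 1 := rfl

theorem qAdjugate_eq {u v : K} (huv : u * v = 1) (M : Matrix (Fin 2) (Fin 2) R) :
    qAdjugate u v M =
      !![M 1 1, -(v • M 0 1); -(v • M 1 0), v • M 0 0 + (1 - v) • M 1 1] := by
  simp only [← Matrix.ext_iff, Fin.forall_fin_two, qAdjugate, qTrace_apply]
  refine ⟨⟨?_, ?_⟩, ?_, ?_⟩ <;> simp [smul_sub, smul_smul, mul_comm v, huv, sub_smul, add_sub_assoc]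

@[simp]
theorem qTrace_scalar_mul (u : K) (c : R) (M : Matrix (Fin 2) (Fin 2) R) :
    qTrace u (scalar (Fin 2) c * M) = c * qTrace u M := by
  simp [qTrace_apply, mul_add]

@[simp]
theorem qTrace_mul_scalar (u : K) (M : Matrix (Fin 2) (Fin 2) R) (c : R) :
    qTrace u (M * scalar (Fin 2) c) = qTrace u M * c := by
  simp [qTrace_apply, add_mul]

theorem qTrace_scalar (u : K) (c : R) : qTrace u (scalar (Fin 2) c) = (1 + u) • c := by
  simp [qTrace_apply, add_smul]

/-- The matrix `DÃD̃A`, a denominator-free form of the commutator `DA⁻¹D⁻¹A`. -/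
def commutatorMatrix (u v : K) (A D : Matrix (Fin 2) (Fin 2) R) : Matrix (Fin 2) (Fin 2) R :=
  D * qAdjugate u v A * qAdjugate u v D * A

/-- The transpose of a matrix with entries moved to the opposite algebra: an anti-automorphism
of matrix algebras, under which the roles of `A` and `D` are interchanged. -/
def opTranspose (K : Type*) {R : Type*} [CommRing K] [Ring R] [Algebra K R] :
    Matrix (Fin 2) (Fin 2) R ≃ₗ[K] Matrix (Fin 2) (Fin 2) Rᵐᵒᵖ :=
  (transposeLinearEquiv (Fin 2) (Fin 2) K R).trans (opLinearEquiv K).mapMatrix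

theorem opTranspose_apply (M : Matrix (Fin 2) (Fin 2) R) (i j : Fin 2) :
    opTranspose K M i j = op (M j i) := rfl

theorem opTranspose_mul (M N : Matrix (Fin 2) (Fin 2) R) :
    opTranspose K (M * N) = opTranspose K N * opTranspose K M := by
  ext; simp [opTranspose_apply, Matrix.mul_apply]

theorem opTranspose_scalar (c : R) :
    opTranspose K (scalar (Fin 2) c) = scalar (Fin 2) (op c) := by
  ext i j; simp [opTranspose_apply, diagonal_apply, eq_comm, apply_ite op]

theorem qTrace_opTranspose (u : K) (M : Matrix (Fin 2) (Fin 2) R) :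
    qTrace u (opTranspose K M) = op (qTrace u M) := rfl

theorem qAdjugate_opTranspose (u v : K) (M : Matrix (Fin 2) (Fin 2) R) :
    qAdjugate u v (opTranspose K M) = opTranspose K (qAdjugate u v M) := by
  simp only [qAdjugate, qTrace_opTranspose, ← opTranspose_scalar (K := K), map_sub, map_smul]

theorem qTrace_commutatorMatrix_opTranspose (u v : K) (A D : Matrix (Fin 2) (Fin 2) R) :
    qTrace u (commutatorMatrix u v (opTranspose K D) (opTranspose K A)) =
      op (qTrace u (commutatorMatrix u v A D)) := by
  simp only [commutatorMatrix, qAdjugate_opTranspose, ← opTranspose_mul, qTrace_opTranspose,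
    mul_assoc]

theorem scalar_smul (k : K) (c : R) : scalar (Fin 2) (k • c) = k • scalar (Fin 2) c := by
  ext; simp [diagonal_apply]

/-- The relations of the reflection equation algebra of `GL₂` for the entries of `A`,
where `v = q²` is invertible with inverse `u = q⁻²`. -/
structure IsReflectionMatrix (u v : K) (A : Matrix (Fin 2) (Fin 2) R) : Prop where
  mul_eq_one : u * v = 1
  rel_12_11 : A 0 1 * A 0 0 = A 0 0 * A 0 1 + (1 - u) • (A 0 1 * A 1 1)
  rel_22_11 : A 1 1 * A 0 0 = A 0 0 * A 1 1
  rel_21_11 : A 1 0 * A 0 0 = A 0 0 * A 1 0 - (1 - u) • (A 1 1 * A 1 0)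
  rel_22_12 : A 1 1 * A 0 1 = v • (A 0 1 * A 1 1)
  rel_21_12 : A 1 0 * A 0 1 = A 0 1 * A 1 0 + (1 - u) • (A 0 0 * A 1 1 - A 1 1 * A 1 1)
  rel_22_21 : A 1 1 * A 1 0 = u • (A 1 0 * A 1 1)

/-- The relations of `𝒟q⁺(GL₂)` for a matrix `A` of coordinates and a matrix `D` of quantum
differential operators: both are reflection matrices, and the cross relations move the entries
of `D` past those of `A`. Here `v = q²` and `u = q⁻²`. -/
structure IsDifferentialPair (u v : K) (A D : Matrix (Fin 2) (Fin 2) R) : Prop where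
  left : IsReflectionMatrix u v A
  right : IsReflectionMatrix u v D
  cross_11_11 : D 0 0 * A 0 0 =
    -((1 - u) • (D 0 1 * A 1 0)) + u • (A 0 0 * D 0 0) + (u - u ^ 2) • (A 0 1 * D 1 0)
  cross_11_12 : D 0 0 * A 0 1 = (u - 1) • (D 0 1 * A 1 1) + u • (A 0 1 * D 0 0)
  cross_11_21 : D 0 0 * A 1 0 =
    (1 - v) • (D 1 0 * A 0 0) - (v - 2 + u) • (D 1 1 * A 1 0)
      + A 1 0 * D 0 0 + (1 - u) • (A 1 1 * D 1 0)
  cross_11_22 : D 0 0 * A 1 1 =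
    (1 - v) • (D 1 0 * A 0 1) - (v - 2 + u) • (D 1 1 * A 1 1) + A 1 1 * D 0 0
  cross_12_11 : D 0 1 * A 0 0 =
    A 0 0 * D 0 1 + (1 - u) • (A 0 1 * D 1 1) + (u - 1) • (A 0 1 * D 0 0)
  cross_12_12 : D 0 1 * A 0 1 = u • (A 0 1 * D 0 1)
  cross_12_21 : D 0 1 * A 1 0 =
    (u - 1) • (D 1 1 * A 0 0) + A 1 0 * D 0 1
      + (u - 1) • (A 1 1 * D 0 0) + (1 - u) • (A 1 1 * D 1 1)
  cross_12_22 : D 0 1 * A 1 1 = (u - 1) • (D 1 1 * A 0 1) + u • (A 1 1 * D 0 1)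
  cross_21_11 : D 1 0 * A 0 0 = u • (A 0 0 * D 1 0) - (1 - u) • (D 1 1 * A 1 0)
  cross_21_12 : D 1 0 * A 0 1 = (u - 1) • (D 1 1 * A 1 1) + A 0 1 * D 1 0
  cross_21_21 : D 1 0 * A 1 0 = u • (A 1 0 * D 1 0)
  cross_21_22 : D 1 0 * A 1 1 = A 1 1 * D 1 0
  cross_22_11 : D 1 1 * A 0 0 = A 0 0 * D 1 1 + (1 - v) • (A 0 1 * D 1 0)
  cross_22_12 : D 1 1 * A 0 1 = A 0 1 * D 1 1
  cross_22_21 : D 1 1 * A 1 0 = u • (A 1 0 * D 1 1) + (u - 1) • (A 1 1 * D 1 0)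
  cross_22_22 : D 1 1 * A 1 1 = u • (A 1 1 * D 1 1)

variable {u v : K} {A D : Matrix (Fin 2) (Fin 2) R}

namespace IsReflectionMatrix

theorem dual (h : IsReflectionMatrix u v A) : IsReflectionMatrix u v (opTranspose K A) := by
  cases h
  constructor
  · assumption
  all_goals
    simp only [opTranspose_apply, ← op_mul, ← op_smul, ← op_add, ← op_sub, op_inj, *] <;>
      match_scalars <;> grind

theorem qDet_opTranspose (h : IsReflectionMatrix u v A) :
    qDet v (opTranspose K A) = op (qDet v A) := by
  simp only [qDet, opTranspose_apply, ← op_mul, ← op_smul, ← op_sub, h.rel_22_11]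

theorem commute_scalar_qTrace (h : IsReflectionMatrix u v A) :
    Commute (scalar (Fin 2) (qTrace u A)) A := by
  cases h
  simp only [Commute, SemiconjBy, ← Matrix.ext_iff, Fin.forall_fin_two, scalar_apply,
    diagonal_mul, mul_diagonal]
  refine ⟨⟨?_, ?_⟩, ?_, ?_⟩
  all_goals
    simp only [qTrace_apply, add_mul, mul_add, smul_mul_assoc, mul_smul_comm, *] <;>
      match_scalars <;> grind

theorem mul_qAdjugate (h : IsReflectionMatrix u v A) :
    A * qAdjugate u v A = scalar (Fin 2) (qDet v A) := by
  cases h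
  simp only [← Matrix.ext_iff, Fin.forall_fin_two, Matrix.mul_apply, Fin.sum_univ_two, scalar_apply,
    qAdjugate, Matrix.smul_apply, Matrix.sub_apply, diagonal_apply, Fin.isValue, reduceIte,
    zero_ne_one, one_ne_zero, zero_sub, qTrace_apply, qDet]
  refine ⟨⟨?_, ?_⟩, ?_, ?_⟩
  all_goals
    simp only [mul_add, mul_sub, mul_smul_comm, mul_neg, *]
    match_scalars <;> grind

theorem commute_scalar_qTrace_qAdjugate (h : IsReflectionMatrix u v A) :
    Commute (scalar (Fin 2) (qTrace u A)) (qAdjugate u v A) :=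
  ((Commute.refl _).sub_right h.commute_scalar_qTrace).smul_right v

theorem qAdjugate_mul (h : IsReflectionMatrix u v A) :
    qAdjugate u v A * A = scalar (Fin 2) (qDet v A) := by
  rw [← h.mul_qAdjugate, qAdjugate, smul_mul_assoc, sub_mul, h.commute_scalar_qTrace.eq,
    mul_smul_comm, mul_sub]

theorem mul_self_eq (h : IsReflectionMatrix u v A) :
    A * A = A * scalar (Fin 2) (qTrace u A) - u • scalar (Fin 2) (qDet v A) := by
  rw [← h.mul_qAdjugate, qAdjugate, mul_smul_comm, smul_smul, h.mul_eq_one, one_smul, mul_sub,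
    sub_sub_cancel]

theorem qAdjugate_mul_self (h : IsReflectionMatrix u v A) :
    qAdjugate u v A * qAdjugate u v A =
      v • (qAdjugate u v A * scalar (Fin 2) (qTrace u A) - scalar (Fin 2) (qDet v A)) := by
  conv_lhs => enter [2]; rw [qAdjugate]
  rw [mul_smul_comm, mul_sub, h.qAdjugate_mul]

theorem commute_scalar_qDet (h : IsReflectionMatrix u v A) :
    Commute (scalar (Fin 2) (qDet v A)) A := by
  rw [Commute, SemiconjBy]
  nth_rw 1 [← h.mul_qAdjugate]
  rw [mul_assoc, h.qAdjugate_mul]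

theorem commute_scalar_qDet_qAdjugate (h : IsReflectionMatrix u v A) :
    Commute (scalar (Fin 2) (qDet v A)) (qAdjugate u v A) := by
  rw [Commute, SemiconjBy]
  nth_rw 1 [← h.qAdjugate_mul]
  rw [mul_assoc, h.mul_qAdjugate]

theorem qDet_mul_qTrace (h : IsReflectionMatrix u v A) :
    qDet v A * qTrace u A = qTrace u A * qDet v A := by
  simpa only [qTrace_scalar_mul, qTrace_mul_scalar] using
    congrArg (qTrace u) h.commute_scalar_qDet.eq

end IsReflectionMatrix

namespace IsDifferentialPair

theorem dual (h : IsDifferentialPair u v A D) :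
    IsDifferentialPair u v (opTranspose K D) (opTranspose K A) := by
  have huv := h.left.mul_eq_one
  constructor
  case left => exact h.right.dual
  case right => exact h.left.dual
  all_goals
    cases h
    simp only [opTranspose_apply, ← op_mul, ← op_smul, ← op_add, ← op_sub, ← op_neg, op_inj, *] <;>
      match_scalars <;> grind

theorem mul_scalar_qTrace (h : IsDifferentialPair u v A D) :
    D * scalar (Fin 2) (qTrace u A) =
      scalar (Fin 2) (qTrace u A) * D + (1 - v) • (D * A) := by
  have huv := h.left.mul_eq_one
  cases h
  simp only [← Matrix.ext_iff, Fin.forall_fin_two, scalar_apply, diagonal_mul, mul_diagonal,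
    Matrix.add_apply, Matrix.smul_apply]
  simp only [Matrix.mul_apply, Fin.sum_univ_two, qTrace_apply, add_mul, mul_add, smul_mul_assoc,
    mul_smul_comm, *]
  refine ⟨⟨?_, ?_⟩, ?_, ?_⟩ <;> match_scalars <;> grind

theorem scalar_qTrace_mul (h : IsDifferentialPair u v A D) :
    scalar (Fin 2) (qTrace u D) * A =
      A * scalar (Fin 2) (qTrace u D) + (1 - v) • (D * A) := by
  apply (opTranspose K).injective
  simpa only [map_add, map_smul, opTranspose_mul, opTranspose_scalar,
    qTrace_opTranspose] using h.dual.mul_scalar_qTrace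

theorem scalar_qTrace_mul_sub (h : IsDifferentialPair u v A D) :
    scalar (Fin 2) (qTrace u (D * A)) - D * A =
      u ^ 3 • (qAdjugate u v A * qAdjugate u v D) := by
  have huv := h.left.mul_eq_one
  cases h
  simp only [← Matrix.ext_iff, Fin.forall_fin_two, Matrix.mul_apply, Fin.sum_univ_two, scalar_apply,
    qAdjugate, Matrix.smul_apply, Matrix.sub_apply, diagonal_apply, Fin.isValue, reduceIte,
    zero_ne_one, one_ne_zero, zero_sub, qTrace_apply]
  refine ⟨⟨?_, ?_⟩, ?_, ?_⟩
  all_goals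
    simp only [add_mul, mul_add, sub_mul, mul_sub, neg_mul, mul_neg, smul_mul_assoc,
      mul_smul_comm, *]
    match_scalars <;> grind

theorem mul_scalar_qDet (h : IsDifferentialPair u v A D) :
    D * scalar (Fin 2) (qDet v A) = u • (scalar (Fin 2) (qDet v A) * D) := by
  have hA := h.left
  cases h
  cases hA
  simp only [← Matrix.ext_iff, Fin.forall_fin_two, scalar_apply, diagonal_mul, mul_diagonal,
    Matrix.smul_apply, qDet]
  refine ⟨⟨?_, ?_⟩, ?_, ?_⟩
  all_goals
    -- Left association moves `D` past the first factor of `det_q(A)`, right association past the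
    -- second; left association again orders the entries of `A`.
    simp only [← mul_assoc, mul_sub, add_mul, sub_mul, neg_mul, smul_mul_assoc, mul_smul_comm, *]
    simp only [mul_assoc, mul_add, mul_sub, mul_smul_comm, *]
    simp only [← mul_assoc, add_mul, sub_mul, smul_mul_assoc, *]
    match_scalars <;> grind

theorem scalar_qDet_mul (h : IsDifferentialPair u v A D) :
    scalar (Fin 2) (qDet v D) * A = u • (A * scalar (Fin 2) (qDet v D)) := by
  apply (opTranspose K).injective
  simpa only [map_smul, opTranspose_mul, opTranspose_scalar, h.right.qDet_opTranspose] using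
    h.dual.mul_scalar_qDet

theorem qTrace_mul_qTrace (h : IsDifferentialPair u v A D) :
    qTrace u D * qTrace u A = qTrace u A * qTrace u D + (1 - v) • qTrace u (D * A) := by
  simpa only [map_add, map_smul, qTrace_scalar_mul, qTrace_mul_scalar] using
    congrArg (qTrace u) h.mul_scalar_qTrace

theorem qTrace_mul_qDet (h : IsDifferentialPair u v A D) :
    qTrace u D * qDet v A = u • (qDet v A * qTrace u D) := by
  simpa only [map_smul, qTrace_scalar_mul, qTrace_mul_scalar] using
    congrArg (qTrace u) h.mul_scalar_qDet

theorem qDet_mul_qTrace (h : IsDifferentialPair u v A D) :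
    qDet v D * qTrace u A = u • (qTrace u A * qDet v D) := by
  simpa only [map_smul, qTrace_scalar_mul, qTrace_mul_scalar] using
    congrArg (qTrace u) h.scalar_qDet_mul

theorem qAdjugate_mul_scalar_qDet (h : IsDifferentialPair u v A D) :
    qAdjugate u v D * scalar (Fin 2) (qDet v A) =
      u • (scalar (Fin 2) (qDet v A) * qAdjugate u v D) := by
  rw [qAdjugate, smul_mul_assoc, sub_mul, h.mul_scalar_qDet, ← map_mul, h.qTrace_mul_qDet,
    scalar_smul, map_mul, mul_smul_comm, mul_sub, smul_comm, smul_sub u]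

theorem qDet_mul_qDet (h : IsDifferentialPair u v A D) :
    qDet v D * qDet v A = u ^ 2 • (qDet v A * qDet v D) := by
  rw [← scalar_inj (n := Fin 2), map_mul, ← h.right.mul_qAdjugate, mul_assoc,
    h.qAdjugate_mul_scalar_qDet, mul_smul_comm, ← mul_assoc, h.mul_scalar_qDet, smul_mul_assoc,
    mul_assoc, h.right.mul_qAdjugate, smul_smul, ← pow_two, scalar_smul, map_mul]

theorem qTrace_mul_mul_qDet (h : IsDifferentialPair u v A D) :
    qTrace u (D * A) * qDet v A = u • (qDet v A * qTrace u (D * A)) := by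
  rw [← qTrace_mul_scalar, mul_assoc, ← h.left.commute_scalar_qDet.eq, ← mul_assoc,
    h.mul_scalar_qDet, smul_mul_assoc, mul_assoc, map_smul, qTrace_scalar_mul]

theorem qDet_mul_qTrace_mul (h : IsDifferentialPair u v A D) :
    qDet v D * qTrace u (D * A) = u • (qTrace u (D * A) * qDet v D) := by
  simpa only [← opTranspose_mul, qTrace_opTranspose, h.right.qDet_opTranspose, ← op_mul, ← op_smul,
    op_inj] using h.dual.qTrace_mul_mul_qDet

theorem mul_mul_self (h : IsDifferentialPair u v A D) :
    D * A * A =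
      D * A * scalar (Fin 2) (qTrace u A) - u ^ 2 • (scalar (Fin 2) (qDet v A) * D) := by
  rw [mul_assoc, h.left.mul_self_eq, mul_sub, mul_smul_comm, h.mul_scalar_qDet, smul_smul,
    ← pow_two, mul_assoc]

theorem mul_mul_scalar_qTrace (h : IsDifferentialPair u v A D) :
    D * A * scalar (Fin 2) (qTrace u A) = u • (scalar (Fin 2) (qTrace u A) * (D * A)) +
      ((1 - u) * u ^ 2) • (scalar (Fin 2) (qDet v A) * D) := by
  have huv := h.left.mul_eq_one
  have key : D * A * scalar (Fin 2) (qTrace u A) =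
      scalar (Fin 2) (qTrace u A) * (D * A) + (1 - v) • (D * A * A) := by
    rw [mul_assoc, ← h.left.commute_scalar_qTrace.eq, ← mul_assoc, h.mul_scalar_qTrace, add_mul,
      smul_mul_assoc, mul_assoc]
  rw [h.mul_mul_self] at key
  linear_combination (norm := (match_scalars <;> grind)) u • key

theorem qTrace_mul_mul_qTrace (h : IsDifferentialPair u v A D) :
    qTrace u (D * A) * qTrace u A = u • (qTrace u A * qTrace u (D * A)) +
      ((1 - u) * u ^ 2) • (qDet v A * qTrace u D) := by
  simpa only [map_add, map_smul, qTrace_scalar_mul, qTrace_mul_scalar] using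
    congrArg (qTrace u) h.mul_mul_scalar_qTrace

theorem qTrace_mul_qTrace_mul (h : IsDifferentialPair u v A D) :
    qTrace u D * qTrace u (D * A) = u • (qTrace u (D * A) * qTrace u D) +
      ((1 - u) * u ^ 2) • (qTrace u A * qDet v D) := by
  simpa only [← opTranspose_mul, qTrace_opTranspose, h.right.qDet_opTranspose, ← op_mul, ← op_smul,
    ← op_add, op_inj] using h.dual.qTrace_mul_mul_qTrace

theorem qTrace_mul_mul_self (h : IsDifferentialPair u v A D) :
    qTrace u (D * A * A) = qTrace u (D * A) * qTrace u A - u ^ 2 • (qDet v A * qTrace u D) := by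
  rw [h.mul_mul_self, map_sub, map_smul, qTrace_mul_scalar, qTrace_scalar_mul]

theorem qTrace_mul_self_mul (h : IsDifferentialPair u v A D) :
    qTrace u (D * (D * A)) =
      qTrace u D * qTrace u (D * A) - u ^ 2 • (qTrace u A * qDet v D) := by
  simpa only [← opTranspose_mul, qTrace_opTranspose, h.right.qDet_opTranspose, ← op_mul, ← op_smul,
    ← op_sub, op_inj] using h.dual.qTrace_mul_mul_self

theorem qTrace_mul_mul_qTrace_mul (h : IsDifferentialPair u v A D) :
    qTrace u (D * A) * qTrace u (D * A) =
      qTrace u (D * A * (D * A)) + (u ^ 4 * (1 + u)) • (qDet v A * qDet v D) := by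
  have key : D * A * scalar (Fin 2) (qTrace u (D * A)) =
      D * A * (D * A) + u ^ 4 • (scalar (Fin 2) (qDet v A * qDet v D)) := by
    rw [← sub_eq_iff_eq_add', ← mul_sub, h.scalar_qTrace_mul_sub, mul_smul_comm, ← mul_assoc,
      mul_assoc D, h.left.mul_qAdjugate, h.mul_scalar_qDet, smul_mul_assoc, mul_assoc,
      h.right.mul_qAdjugate, smul_smul, map_mul, ← pow_succ]
  simpa only [map_add, map_smul, qTrace_mul_scalar, qTrace_scalar, smul_smul] using
    congrArg (qTrace u) key

theorem mul_qAdjugate (h : IsDifferentialPair u v A D) :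
    D * qAdjugate u v A = v • (scalar (Fin 2) (qTrace u A) * D - v • (D * A)) := by
  rw [qAdjugate, mul_smul_comm, mul_sub, h.mul_scalar_qTrace]
  module

theorem qAdjugate_mul (h : IsDifferentialPair u v A D) :
    qAdjugate u v D * A = v • (A * scalar (Fin 2) (qTrace u D) - v • (D * A)) := by
  rw [qAdjugate, smul_mul_assoc, sub_mul, h.scalar_qTrace_mul]
  module

theorem mul_qAdjugate_mul (h : IsDifferentialPair u v A D) :
    D * qAdjugate u v A * (scalar (Fin 2) (qTrace u A) + (u ^ 2 - u) • qAdjugate u v A) =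
      u • (scalar (Fin 2) (qTrace u A) * (D * qAdjugate u v A)) := by
  have huv := h.left.mul_eq_one
  have h₁ : D * qAdjugate u v A * scalar (Fin 2) (qTrace u A) =
      scalar (Fin 2) (qTrace u A) * (D * qAdjugate u v A) +
        ((1 - v) * u) • (scalar (Fin 2) (qDet v A) * D) := by
    rw [mul_assoc, ← h.left.commute_scalar_qTrace_qAdjugate.eq, ← mul_assoc, h.mul_scalar_qTrace,
      add_mul, smul_mul_assoc, mul_assoc, mul_assoc, h.left.mul_qAdjugate, h.mul_scalar_qDet,
      smul_smul]
  have h₂ : D * qAdjugate u v A * qAdjugate u v A =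
      v • (D * qAdjugate u v A * scalar (Fin 2) (qTrace u A)) -
        (v * u) • (scalar (Fin 2) (qDet v A) * D) := by
    rw [mul_assoc, h.left.qAdjugate_mul_self, mul_smul_comm, mul_sub, h.mul_scalar_qDet, smul_sub,
      smul_smul, mul_assoc]
  rw [mul_add, mul_smul_comm, h₂, h₁]
  match_scalars <;> grind

theorem qAdjugate_mul_scalar_qTrace (h : IsDifferentialPair u v A D) :
    qAdjugate u v D * scalar (Fin 2) (qTrace u A) =
      (scalar (Fin 2) (qTrace u A) + (u ^ 2 - u) • qAdjugate u v A) * qAdjugate u v D := by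
  have huv := h.left.mul_eq_one
  have key : qAdjugate u v D * scalar (Fin 2) (qTrace u A) =
      scalar (Fin 2) (qTrace u A) * qAdjugate u v D +
        (v * (1 - v)) • (scalar (Fin 2) (qTrace u (D * A)) - D * A) := by
    rw [qAdjugate, smul_mul_assoc, sub_mul, h.mul_scalar_qTrace, ← map_mul, h.qTrace_mul_qTrace,
      map_add, map_mul, scalar_smul, mul_smul_comm, mul_sub]
    module
  rw [key, h.scalar_qTrace_mul_sub, add_mul, smul_mul_assoc, smul_smul]
  congr 2
  grind

theorem commutatorMatrix_mul_scalar_qTrace (h : IsDifferentialPair u v A D) :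
    commutatorMatrix u v A D * scalar (Fin 2) (qTrace u A) =
      u • (scalar (Fin 2) (qTrace u A) * commutatorMatrix u v A D) := by
  rw [commutatorMatrix, mul_assoc, ← h.left.commute_scalar_qTrace.eq, ← mul_assoc,
    mul_assoc (D * qAdjugate u v A), h.qAdjugate_mul_scalar_qTrace, ← mul_assoc,
    h.mul_qAdjugate_mul, smul_mul_assoc, smul_mul_assoc]
  simp only [mul_assoc]

theorem commutatorMatrix_mul_scalar_qDet (h : IsDifferentialPair u v A D) :
    commutatorMatrix u v A D * scalar (Fin 2) (qDet v A) =
      u ^ 2 • (scalar (Fin 2) (qDet v A) * commutatorMatrix u v A D) := by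
  rw [commutatorMatrix, mul_assoc, ← h.left.commute_scalar_qDet.eq, ← mul_assoc,
    mul_assoc (D * qAdjugate u v A), h.qAdjugate_mul_scalar_qDet, mul_smul_comm, smul_mul_assoc,
    ← mul_assoc, mul_assoc D, ← h.left.commute_scalar_qDet_qAdjugate.eq, ← mul_assoc,
    h.mul_scalar_qDet]
  simp only [smul_mul_assoc, smul_smul, mul_assoc, pow_two]

theorem qTrace_commutatorMatrix_mul_qTrace_left (h : IsDifferentialPair u v A D) :
    qTrace u (commutatorMatrix u v A D) * qTrace u A =
      u • (qTrace u A * qTrace u (commutatorMatrix u v A D)) := by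
  simpa only [map_smul, qTrace_scalar_mul, qTrace_mul_scalar] using
    congrArg (qTrace u) h.commutatorMatrix_mul_scalar_qTrace

theorem qTrace_commutatorMatrix_mul_qDet_left (h : IsDifferentialPair u v A D) :
    qTrace u (commutatorMatrix u v A D) * qDet v A =
      u ^ 2 • (qDet v A * qTrace u (commutatorMatrix u v A D)) := by
  simpa only [map_smul, qTrace_scalar_mul, qTrace_mul_scalar] using
    congrArg (qTrace u) h.commutatorMatrix_mul_scalar_qDet

theorem qTrace_mul_qTrace_commutatorMatrix (h : IsDifferentialPair u v A D) :
    qTrace u D * qTrace u (commutatorMatrix u v A D) =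
      u • (qTrace u (commutatorMatrix u v A D) * qTrace u D) := by
  simpa only [qTrace_commutatorMatrix_opTranspose, qTrace_opTranspose, ← op_mul, ← op_smul,
    op_inj] using h.dual.qTrace_commutatorMatrix_mul_qTrace_left

theorem qDet_mul_qTrace_commutatorMatrix (h : IsDifferentialPair u v A D) :
    qDet v D * qTrace u (commutatorMatrix u v A D) =
      u ^ 2 • (qTrace u (commutatorMatrix u v A D) * qDet v D) := by
  simpa only [qTrace_commutatorMatrix_opTranspose, h.right.qDet_opTranspose, ← op_mul, ← op_smul,
    op_inj] using h.dual.qTrace_commutatorMatrix_mul_qDet_left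

theorem qTrace_commutatorMatrix (h : IsDifferentialPair u v A D) :
    qTrace u (commutatorMatrix u v A D) =
      v ^ 2 • (qTrace u A * qTrace u (D * A) * qTrace u D
        - v • (qTrace u A * qTrace u (D * (D * A)))
        - v • (qTrace u (D * A * A) * qTrace u D)
        + v ^ 2 • qTrace u (D * A * (D * A))) := by
  have key : commutatorMatrix u v A D =
      v ^ 2 • (scalar (Fin 2) (qTrace u A) * (D * A) * scalar (Fin 2) (qTrace u D)
        - v • (scalar (Fin 2) (qTrace u A) * (D * (D * A)))
        - v • (D * A * A * scalar (Fin 2) (qTrace u D))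
        + v ^ 2 • (D * A * (D * A))) := by
    rw [commutatorMatrix, mul_assoc, h.mul_qAdjugate, h.qAdjugate_mul]
    simp only [smul_mul_assoc, mul_smul_comm, sub_mul, mul_sub, mul_assoc]
    module
  rw [key]
  simp only [map_add, map_sub, map_smul, qTrace_scalar_mul, qTrace_mul_scalar]

theorem smul_qTrace_mul_mul_qTrace_mul (h : IsDifferentialPair u v A D) :
    v ^ 2 • (qTrace u (D * A) * qTrace u (D * A)) =
      u ^ 2 • qTrace u (commutatorMatrix u v A D) + (u ^ 2 + u ^ 3) • (qDet v A * qDet v D)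
        - u ^ 2 • (qDet v A * qTrace u D * qTrace u D)
        - u ^ 2 • (qTrace u A * qTrace u A * qDet v D)
        + qTrace u A * qTrace u (D * A) * qTrace u D := by
  have huv := h.left.mul_eq_one
  rw [h.qTrace_mul_mul_qTrace_mul, h.qTrace_commutatorMatrix, h.qTrace_mul_self_mul,
    h.qTrace_mul_mul_self, h.qTrace_mul_qTrace_mul, h.qTrace_mul_mul_qTrace]
  simp only [mul_add, mul_sub, add_mul, sub_mul, mul_smul_comm, smul_mul_assoc, mul_assoc]
  match_scalars <;> grind

end IsDifferentialPair

/-- The defining relations of `ℬ` between `c₁, c₂, d₁, d₂, r, w` (invertibility of `c₂`, `d₂`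
aside), with `u`, `v` standing for `q⁻²`, `q²`. -/
structure IsBTuple (u v : K) (c₁ c₂ d₁ d₂ r w : R) : Prop where
  c₂_mul_c₁ : c₂ * c₁ = c₁ * c₂
  d₂_mul_d₁ : d₂ * d₁ = d₁ * d₂
  d₂_mul_c₂ : d₂ * c₂ = u ^ 2 • (c₂ * d₂)
  d₂_mul_c₁ : d₂ * c₁ = u • (c₁ * d₂)
  d₁_mul_c₂ : d₁ * c₂ = u • (c₂ * d₁)
  d₁_mul_c₁ : d₁ * c₁ = c₁ * d₁ + (u - 1) • r
  d₂_mul_r : d₂ * r = u • (r * d₂)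
  r_mul_c₂ : r * c₂ = u • (c₂ * r)
  d₁_mul_r : d₁ * r = u • (r * d₁) + ((1 - u) * u) • (c₁ * d₂)
  r_mul_c₁ : r * c₁ = u • (c₁ * r) + ((1 - u) * u) • (c₂ * d₁)
  r_mul_r : r * r = u ^ 2 • w + (u ^ 2 + u ^ 3) • (c₂ * d₂) - u ^ 2 • (c₂ * d₁ * d₁)
    - u ^ 2 • (c₁ * c₁ * d₂) + u • (c₁ * r * d₁)
  w_mul_r : w * r = r * w
  w_mul_c₁ : w * c₁ = u • (c₁ * w)
  w_mul_c₂ : w * c₂ = u ^ 2 • (c₂ * w)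
  w_mul_d₁ : w * d₁ = v • (d₁ * w)
  w_mul_d₂ : w * d₂ = v ^ 2 • (d₂ * w)

-- The element below is, up to rescaling, `r²` without its terms in `w` and `c₂ d₂`, so this is
-- what makes `w` commute with `r`.
theorem commute_mul_mul_sub_smul_sub_smul {t : K} {c₁ c₂ d₁ d₂ r : R} (hc : c₂ * c₁ = c₁ * c₂)
    (hd : d₂ * d₁ = d₁ * d₂) (hdr₂ : d₂ * r = u • (r * d₂)) (hrc₂ : r * c₂ = u • (c₂ * r))
    (hdr₁ : d₁ * r = u • (r * d₁) + ((1 - u) * t) • (c₁ * d₂))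
    (hrc₁ : r * c₁ = u • (c₁ * r) + ((1 - u) * t) • (c₂ * d₁)) :
    Commute (c₁ * r * d₁ - t • (c₂ * d₁ * d₁) - t • (c₁ * c₁ * d₂)) r := by
  have hc' (x : R) : c₂ * (c₁ * x) = c₁ * (c₂ * x) := by rw [← mul_assoc, hc, mul_assoc]
  have hrc₂' (x : R) : r * (c₂ * x) = u • (c₂ * (r * x)) := by
    rw [← mul_assoc, hrc₂, smul_mul_assoc, mul_assoc]
  have hdr₁' (x : R) : d₁ * (r * x) = u • (r * (d₁ * x)) + ((1 - u) * t) • (c₁ * (d₂ * x)) := by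
    rw [← mul_assoc, hdr₁, add_mul, smul_mul_assoc, smul_mul_assoc, mul_assoc, mul_assoc]
  have hrc₁' (x : R) : r * (c₁ * x) = u • (c₁ * (r * x)) + ((1 - u) * t) • (c₂ * (d₁ * x)) := by
    rw [← mul_assoc, hrc₁, add_mul, smul_mul_assoc, smul_mul_assoc, mul_assoc, mul_assoc]
  simp only [Commute, SemiconjBy, mul_assoc, mul_add, mul_sub, sub_mul, smul_mul_assoc,
    mul_smul_comm, *]
  module

namespace IsDifferentialPair

theorem commute_qTrace_commutatorMatrix (h : IsDifferentialPair u v A D) :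
    Commute (qTrace u (commutatorMatrix u v A D)) (qTrace u (D * A)) := by
  have huv := h.left.mul_eq_one
  have h_dets : Commute (qDet v A * qDet v D) (qTrace u (D * A)) := by
    rw [Commute, SemiconjBy, mul_assoc, h.qDet_mul_qTrace_mul, ← mul_assoc, h.qTrace_mul_mul_qDet,
      mul_smul_comm, smul_mul_assoc, mul_assoc]
  have h_rest := commute_mul_mul_sub_smul_sub_smul h.left.qDet_mul_qTrace h.right.qDet_mul_qTrace
    h.qDet_mul_qTrace_mul h.qTrace_mul_mul_qDet h.qTrace_mul_qTrace_mul h.qTrace_mul_mul_qTrace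
  set e := qTrace u A * qTrace u (D * A) * qTrace u D -
    u ^ 2 • (qDet v A * qTrace u D * qTrace u D) -
    u ^ 2 • (qTrace u A * qTrace u A * qDet v D) with he
  have key : qTrace u (commutatorMatrix u v A D) =
      v ^ 2 • (v ^ 2 • (qTrace u (D * A) * qTrace u (D * A)) -
        (u ^ 2 + u ^ 3) • (qDet v A * qDet v D) - e) := by
    rw [h.smul_qTrace_mul_mul_qTrace_mul, he]
    match_scalars <;> grind
  rw [key]
  have h_self := Commute.refl (qTrace u (D * A))
  exact ((((h_self.mul_left h_self).smul_left _).sub_left (h_dets.smul_left _)).sub_left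
    h_rest).smul_left _

theorem isBTuple (h : IsDifferentialPair u v A D) :
    IsBTuple u v (qTrace u A) (qDet v A) (qTrace u D) (qDet v D) (v • qTrace u (D * A))
      (qTrace u (commutatorMatrix u v A D)) where
  c₂_mul_c₁ := h.left.qDet_mul_qTrace
  d₂_mul_d₁ := h.right.qDet_mul_qTrace
  d₂_mul_c₂ := h.qDet_mul_qDet
  d₂_mul_c₁ := h.qDet_mul_qTrace
  d₁_mul_c₂ := h.qTrace_mul_qDet
  d₁_mul_c₁ := by
    rw [h.qTrace_mul_qTrace, smul_smul, sub_mul, h.left.mul_eq_one, one_mul]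
  d₂_mul_r := by
    rw [mul_smul_comm, h.qDet_mul_qTrace_mul, smul_mul_assoc, smul_comm]
  r_mul_c₂ := by
    rw [smul_mul_assoc, h.qTrace_mul_mul_qDet, mul_smul_comm, smul_comm]
  d₁_mul_r := by
    have huv := h.left.mul_eq_one
    rw [mul_smul_comm, h.qTrace_mul_qTrace_mul, smul_mul_assoc]
    match_scalars <;> grind
  r_mul_c₁ := by
    have huv := h.left.mul_eq_one
    rw [smul_mul_assoc, h.qTrace_mul_mul_qTrace, mul_smul_comm]
    match_scalars <;> grind
  r_mul_r := by
    rw [smul_mul_smul_comm, ← pow_two, h.smul_qTrace_mul_mul_qTrace_mul, mul_smul_comm,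
      smul_mul_assoc, smul_smul u, h.left.mul_eq_one, one_smul]
  w_mul_r := (h.commute_qTrace_commutatorMatrix.smul_right v).eq
  w_mul_c₁ := h.qTrace_commutatorMatrix_mul_qTrace_left
  w_mul_c₂ := h.qTrace_commutatorMatrix_mul_qDet_left
  w_mul_d₁ := by
    rw [h.qTrace_mul_qTrace_commutatorMatrix, smul_smul, mul_comm, h.left.mul_eq_one, one_smul]
  w_mul_d₂ := by
    rw [h.qDet_mul_qTrace_commutatorMatrix, smul_smul, ← mul_pow, mul_comm v, h.left.mul_eq_one,
      one_pow, one_smul]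

end IsDifferentialPair

section DqLoc

variable {q : ℂ}

theorem inv_pow_two_mul_pow_two (hq : q ≠ 0) : q⁻¹ ^ 2 * q ^ 2 = 1 := by
  rw [← mul_pow, inv_mul_cancel₀ hq, one_pow]

theorem IsBTuple.exists_algHom {R : Type*} [Ring R] [Algebra ℂ R] {c₁ d₁ r w : R} {c₂ d₂ : Rˣ}
    (h : IsBTuple (q⁻¹ ^ 2) (q ^ 2) c₁ ↑c₂ d₁ ↑d₂ r w) :
    ∃ Ψ : AlgB q →ₐ[ℂ] R,
      Ψ (bc1 q) = c₁ ∧ Ψ (bc2 q) = c₂ ∧ Ψ (bc2i q) = ↑c₂⁻¹ ∧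
      Ψ (bd1 q) = d₁ ∧ Ψ (bd2 q) = d₂ ∧ Ψ (bd2i q) = ↑d₂⁻¹ ∧
      Ψ (br q) = r ∧ Ψ (bw q) = w := by
  let φ : FB →ₐ[ℂ] R := FreeAlgebra.lift ℂ fun
    | .c1 => c₁ | .c2 => c₂ | .c2i => ↑c₂⁻¹ | .d1 => d₁ | .d2 => d₂ | .d2i => ↑d₂⁻¹
    | .r => r | .w => w
  have hφ {x y : FB} (hxy : BRel q x y) : φ x = φ y := by
    cases h
    cases hxy <;>
      simp only [φ, gB, map_mul, map_add, map_sub, map_smul, map_one, FreeAlgebra.lift_ι_apply,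
        Units.mul_inv, Units.inv_mul, *] <;>
      simp only [← pow_mul, Nat.reduceMul]
  have hΨ (x : FB) : RingQuot.liftAlgHom ℂ ⟨φ, @hφ⟩ (RingQuot.mkAlgHom ℂ (BRel q) x) = φ x :=
    RingQuot.liftAlgHom_mkAlgHom_apply ..
  refine ⟨RingQuot.liftAlgHom ℂ ⟨φ, @hφ⟩, ?_, ?_, ?_, ?_, ?_, ?_, ?_, ?_⟩ <;>
    exact (hΨ _).trans (FreeAlgebra.lift_ι_apply _ _)

theorem isReflectionMatrix_Amat (hq : q ≠ 0) :
    IsReflectionMatrix (q⁻¹ ^ 2) (q ^ 2) (Amat q) := by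
  have of_rel {x y : FQL} (h : QLRel q x y) := RingQuot.mkAlgHom_rel ℂ h
  have h₁ := of_rel .a1
  have h₂ := of_rel .a2
  have h₃ := of_rel .a3
  have h₄ := of_rel .a4
  have h₅ := of_rel .a5
  have h₆ := of_rel .a6
  simp only [map_mul, map_add, map_sub, map_smul] at h₁ h₂ h₃ h₄ h₅ h₆
  exact ⟨inv_pow_two_mul_pow_two hq, h₁, h₂, h₃, h₄, h₅, h₆⟩

theorem isReflectionMatrix_Dmat (hq : q ≠ 0) :
    IsReflectionMatrix (q⁻¹ ^ 2) (q ^ 2) (Dmat q) := by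
  have of_rel {x y : FQL} (h : QLRel q x y) := RingQuot.mkAlgHom_rel ℂ h
  have h₁ := of_rel .p1
  have h₂ := of_rel .p2
  have h₃ := of_rel .p3
  have h₄ := of_rel .p4
  have h₅ := of_rel .p5
  have h₆ := of_rel .p6
  simp only [map_mul, map_add, map_sub, map_smul] at h₁ h₂ h₃ h₄ h₅ h₆
  exact ⟨inv_pow_two_mul_pow_two hq, h₁, h₂, h₃, h₄, h₅, h₆⟩

theorem isDifferentialPair_Amat_Dmat (hq : q ≠ 0) :
    IsDifferentialPair (q⁻¹ ^ 2) (q ^ 2) (Amat q) (Dmat q) := by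
  have h_coeff : (q - q⁻¹) ^ 2 = q ^ 2 - 2 + q⁻¹ ^ 2 := by
    field_simp
    ring
  have of_rel {x y : FQL} (h : QLRel q x y) := RingQuot.mkAlgHom_rel ℂ h
  constructor
  case left => exact isReflectionMatrix_Amat hq
  case right => exact isReflectionMatrix_Dmat hq
  case' cross_11_11 => rw [← pow_mul]; have h := of_rel .c1
  case' cross_11_12 => have h := of_rel .c2
  case' cross_11_21 => rw [← h_coeff]; have h := of_rel .c3
  case' cross_11_22 => rw [← h_coeff]; have h := of_rel .c4
  case' cross_12_11 => have h := of_rel .c5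
  case' cross_12_12 => have h := of_rel .c6
  case' cross_12_21 => have h := of_rel .c7
  case' cross_12_22 => have h := of_rel .c8
  case' cross_21_11 => have h := of_rel .c9
  case' cross_21_12 => have h := of_rel .c10
  case' cross_21_21 => have h := of_rel .c11
  case' cross_21_22 => have h := of_rel .c12
  case' cross_22_11 => have h := of_rel .c13
  case' cross_22_12 => have h := of_rel .c14
  case' cross_22_21 => have h := of_rel .c15
  case' cross_22_22 => have h := of_rel .c16
  all_goals
    simp only [map_mul, map_add, map_sub, map_neg, map_smul] at h
    exact h

theorem isBTuple_DqLoc (hq : q ≠ 0) :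
    IsBTuple (q⁻¹ ^ 2) (q ^ 2) (c1El q) (c2El q) (d1El q) (d2El q) (rEl q) (wEl q) := by
  have h_inv := inv_pow_two_mul_pow_two hq
  have h := (isDifferentialPair_Amat_Dmat hq).isBTuple
  rw [commutatorMatrix, qAdjugate_eq h_inv, qAdjugate_eq h_inv] at h
  exact h

/-- `det_q(A)` as a unit of `𝒟q(GL₂)`. -/
def detAUnit (q : ℂ) : (DqLoc q)ˣ where
  val := c2El q
  inv := ai q
  val_inv := by
    have h := RingQuot.mkAlgHom_rel ℂ (QLRel.invA2 (q := q))
    simp only [map_mul, map_sub, map_smul, map_one] at h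
    exact h
  inv_val := by
    have h := RingQuot.mkAlgHom_rel ℂ (QLRel.invA1 (q := q))
    simp only [map_mul, map_sub, map_smul, map_one] at h
    exact h

/-- `det_q(D)` as a unit of `𝒟q(GL₂)`. -/
def detDUnit (q : ℂ) : (DqLoc q)ˣ where
  val := d2El q
  inv := di q
  val_inv := by
    have h := RingQuot.mkAlgHom_rel ℂ (QLRel.invD2 (q := q))
    simp only [map_mul, map_sub, map_smul, map_one] at h
    exact h
  inv_val := by
    have h := RingQuot.mkAlgHom_rel ℂ (QLRel.invD1 (q := q))
    simp only [map_mul, map_sub, map_smul, map_one] at h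
    exact h

end DqLoc

end QuantumGL2

/-- The elements `c₁ = tr_q(A)`, `c₂ = det_q(A)`, `d₁ = tr_q(D)`,
`d₂ = det_q(D)`, `r = q²·tr_q(DA)` and `w = tr_q(DÃD̃A)` of `𝒟q(GL₂)`, with `c₂`
and `d₂` invertible there, satisfy all sixteen defining relations of `ℬ`;
consequently there is a ℂ-algebra homomorphism `Ψ̄ : ℬ → 𝒟q(GL₂)` sending the
generators `c₁, c₂, c₂⁻¹, d₁, d₂, d₂⁻¹, r, w` to these elements. -/
theorem stmt16 (q : ℂ) (hq : q ≠ 0) :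
    (c2El q * ai q = 1 ∧ ai q * c2El q = 1 ∧
     d2El q * di q = 1 ∧ di q * d2El q = 1 ∧
     c2El q * c1El q = c1El q * c2El q ∧
     d2El q * d1El q = d1El q * d2El q ∧
     d2El q * c2El q = (q⁻¹ ^ 4) • (c2El q * d2El q) ∧
     d2El q * c1El q = (q⁻¹ ^ 2) • (c1El q * d2El q) ∧
     d1El q * c2El q = (q⁻¹ ^ 2) • (c2El q * d1El q) ∧
     d1El q * c1El q = c1El q * d1El q + (q⁻¹ ^ 2 - 1) • rEl q ∧
     d2El q * rEl q = (q⁻¹ ^ 2) • (rEl q * d2El q) ∧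
     rEl q * c2El q = (q⁻¹ ^ 2) • (c2El q * rEl q) ∧
     d1El q * rEl q
       = (q⁻¹ ^ 2) • (rEl q * d1El q) + ((1 - q⁻¹ ^ 2) * q⁻¹ ^ 2) • (c1El q * d2El q) ∧
     rEl q * c1El q
       = (q⁻¹ ^ 2) • (c1El q * rEl q) + ((1 - q⁻¹ ^ 2) * q⁻¹ ^ 2) • (c2El q * d1El q) ∧
     rEl q * rEl q
       = (q⁻¹ ^ 4) • wEl q + (q⁻¹ ^ 4 + q⁻¹ ^ 6) • (c2El q * d2El q)
         - (q⁻¹ ^ 4) • (c2El q * d1El q * d1El q)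
         - (q⁻¹ ^ 4) • (c1El q * c1El q * d2El q)
         + (q⁻¹ ^ 2) • (c1El q * rEl q * d1El q) ∧
     wEl q * rEl q = rEl q * wEl q ∧
     wEl q * c1El q = (q⁻¹ ^ 2) • (c1El q * wEl q) ∧
     wEl q * c2El q = (q⁻¹ ^ 4) • (c2El q * wEl q) ∧
     wEl q * d1El q = (q ^ 2) • (d1El q * wEl q) ∧
     wEl q * d2El q = (q ^ 4) • (d2El q * wEl q)) ∧
    ∃ Ψ : AlgB q →ₐ[ℂ] DqLoc q,
      Ψ (bc1 q) = c1El q ∧ Ψ (bc2 q) = c2El q ∧ Ψ (bc2i q) = ai q ∧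
      Ψ (bd1 q) = d1El q ∧ Ψ (bd2 q) = d2El q ∧ Ψ (bd2i q) = di q ∧
      Ψ (br q) = rEl q ∧ Ψ (bw q) = wEl q := by
  have h := QuantumGL2.isBTuple_DqLoc hq
  have h_inv4 : q⁻¹ ^ 4 = (q⁻¹ ^ 2) ^ 2 := pow_mul q⁻¹ 2 2
  have h_inv6 : q⁻¹ ^ 6 = (q⁻¹ ^ 2) ^ 3 := pow_mul q⁻¹ 2 3
  have h_pow4 : q ^ 4 = (q ^ 2) ^ 2 := pow_mul q 2 2
  rw [h_inv4, h_inv6, h_pow4]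
  let c₂ := QuantumGL2.detAUnit q
  let d₂ := QuantumGL2.detDUnit q
  exact ⟨⟨c₂.mul_inv, c₂.inv_mul, d₂.mul_inv, d₂.inv_mul, h.c₂_mul_c₁, h.d₂_mul_d₁, h.d₂_mul_c₂,
    h.d₂_mul_c₁, h.d₁_mul_c₂, h.d₁_mul_c₁, h.d₂_mul_r, h.r_mul_c₂, h.d₁_mul_r, h.r_mul_c₁,
    h.r_mul_r, h.w_mul_r, h.w_mul_c₁, h.w_mul_c₂, h.w_mul_d₁, h.w_mul_d₂⟩,
    h.exists_algHom (c₂ := c₂) (d₂ := d₂)⟩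
end
end

section
/- The images under Ψ̄ of the monomials c₁^{a₁}c₂^{a₂}r^{ε}d₁^{b₁}d₂^{b₂}w^{c}, with a₁, b₁, c ∈ ℕ₀, a₂, b₂ ∈ ℤ and ε ∈ {0,1}, are linearly independent over ℂ in 𝒟q(GL₂); in particular the homomorphism Ψ̄: ℬ → 𝒟q(GL₂) is injective. -/
noncomputable section

/-- Integer powers of an element `x` with designated inverse `xi`:
negative exponents are interpreted via the inverse generator. -/
def zp {M : Type*} [Monoid M] (x xi : M) : ℤ → M
  | Int.ofNat n => x ^ n
  | Int.negSucc n => xi ^ (n + 1)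

/-- The PBW family `c₁^{a₁}c₂^{a₂}r^{ε}d₁^{b₁}d₂^{b₂}w^{c}` of `ℬ`, indexed by
`a₁, b₁, c ∈ ℕ`, `a₂, b₂ ∈ ℤ`, `ε ∈ {0,1}`. -/
def pbwB (q : ℂ) : ℕ × ℤ × Fin 2 × ℕ × ℤ × ℕ → AlgB q :=
  fun x => bc1 q ^ x.1 * zp (bc2 q) (bc2i q) x.2.1 * br q ^ (x.2.2.1 : ℕ) *
    bd1 q ^ x.2.2.2.1 * zp (bd2 q) (bd2i q) x.2.2.2.2.1 * bw q ^ x.2.2.2.2.2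

/-!
The relation for `r²` expresses `w` through the other generators, so `ℬ` is spanned by the monomials
`c₁^a c₂^k r^n d₁^b d₂^l` with arbitrary `n`, and `w` equals `q⁴r²` up to terms of lower degree in
`r`. A chart maps `𝒟q(GL₂)` to a quantum torus in such a way that, for a suitable degree, the images
of `c₁, c₂, r, d₁, d₂` have as leading terms monomials with linearly independent exponents. Hence
the images of the monomials above have pairwise distinct leading terms and are linearly
independent: `Ψ̄` maps a spanning family to a linearly independent one, so it is injective. The PBW
monomial with exponents `ε` of `r` and `c` of `w` leads with `r^(ε + 2c)`, so the PBW monomials are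
linearly independent in `ℬ`, and so are their images.
-/

section LeadingTerm

variable (K : Type*) [Field K] {V W κ κ' α α' : Type*}
  [AddCommGroup V] [Module K V] [AddCommGroup W] [Module K W]

/-- The span of the members of a graded family `T` whose degree is smaller than `n`. -/
def lowerSpan [LT α] (T : κ → V) (deg : κ → α) (n : α) : Submodule K V :=
  Submodule.span K (T '' {k | deg k < n})

/-- `v` has leading term `T k` with respect to a graded family `T`: up to a nonzero scalar it is
`T k` plus terms of degree smaller than that of `T k`. -/
def HasLeadingTerm [LT α] (T : κ → V) (deg : κ → α) (v : V) (k : κ) : Prop :=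
  ∃ c : K, c ≠ 0 ∧ v - c • T k ∈ lowerSpan K T deg (deg k)

variable {K} {T : κ → V} {deg : κ → α} {T' : κ' → W} {deg' : κ' → α'}

theorem apply_mem_lowerSpan [LT α] {k : κ} {n : α} (h : deg k < n) : T k ∈ lowerSpan K T deg n :=
  Submodule.subset_span ⟨k, h, rfl⟩

theorem lowerSpan_le [LT α] {n : α} {M : Submodule K V} :
    lowerSpan K T deg n ≤ M ↔ ∀ k, deg k < n → T k ∈ M := by
  simp [lowerSpan, Submodule.span_le, Set.subset_def]

theorem map_mem_of_mem_lowerSpan [LT α] {n : α} {M : Submodule K W} {f : V →ₗ[K] W}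
    (h : ∀ k, deg k < n → f (T k) ∈ M) {v : V} (hv : v ∈ lowerSpan K T deg n) : f v ∈ M :=
  (lowerSpan_le (M := M.comap f)).2 h hv

theorem lowerSpan_mono [Preorder α] : Monotone (lowerSpan K T deg) := fun _ _ hmn ↦
  lowerSpan_le.2 fun _ hk ↦ apply_mem_lowerSpan (hk.trans_le hmn)

theorem lowerSpan_mul_lowerSpan_le {R Λ : Type*} [Ring R] [Algebra K R] [AddMonoid Λ]
    {T : Λ → R} (deg : Λ →+ ℤ) (hmul : ∀ e f, ∃ c : K, c ≠ 0 ∧ T e * T f = c • T (e + f))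
    (m n : ℤ) :
    lowerSpan K T deg m * lowerSpan K T deg n ≤ lowerSpan K T deg (m + n - 1) := by
  rw [lowerSpan, lowerSpan, Submodule.span_mul_span, Submodule.span_le]
  rintro _ ⟨_, ⟨e, he, rfl⟩, _, ⟨f, hf, rfl⟩, rfl⟩
  obtain ⟨c, -, hc⟩ := hmul e f
  rw [Set.mem_ofPred_eq] at he hf
  simp only [hc]
  exact Submodule.smul_mem _ _ (apply_mem_lowerSpan (by rw [map_add]; omega))

namespace HasLeadingTerm

theorem of_eq_smul_add [LT α] {v u : V} {k : κ} {c : K} (hc : c ≠ 0) (hv : v = c • T k + u)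
    (hu : u ∈ lowerSpan K T deg (deg k)) : HasLeadingTerm K T deg v k :=
  ⟨c, hc, by rwa [hv, add_sub_cancel_left]⟩

theorem self [LT α] (k : κ) : HasLeadingTerm K T deg (T k) k :=
  of_eq_smul_add one_ne_zero (by rw [one_smul, add_zero]) (zero_mem _)

theorem const_smul [LT α] {v : V} {k : κ} {c : K} (hc : c ≠ 0) (h : HasLeadingTerm K T deg v k) :
    HasLeadingTerm K T deg (c • v) k := by
  obtain ⟨d, hd, h⟩ := h
  refine ⟨c * d, mul_ne_zero hc hd, ?_⟩
  rw [mul_smul, ← smul_sub]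
  exact Submodule.smul_mem _ _ h

theorem mem_lowerSpan [Preorder α] {v : V} {k : κ} {n : α} (h : HasLeadingTerm K T deg v k)
    (hk : deg k < n) : v ∈ lowerSpan K T deg n := by
  obtain ⟨c, -, h⟩ := h
  rw [← sub_add_cancel v (c • T k)]
  exact add_mem (lowerSpan_mono hk.le h) (Submodule.smul_mem _ _ (apply_mem_lowerSpan hk))

theorem map [LT α] [LT α'] {v : V} {k : κ} {k' : κ'} (h : HasLeadingTerm K T deg v k)
    (f : V →ₗ[K] W)
    (hf : ∀ u ∈ lowerSpan K T deg (deg k), f u ∈ lowerSpan K T' deg' (deg' k'))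
    (hk : HasLeadingTerm K T' deg' (f (T k)) k') : HasLeadingTerm K T' deg' (f v) k' := by
  obtain ⟨c, hc, h⟩ := h
  obtain ⟨d, hd, hk⟩ := hk
  refine ⟨c * d, mul_ne_zero hc hd, ?_⟩
  have hsplit : f v - (c * d) • T' k' = f (v - c • T k) + c • (f (T k) - d • T' k') := by
    rw [map_sub, map_smul, smul_sub, smul_smul]
    abel
  rw [hsplit]
  exact add_mem (hf _ h) (Submodule.smul_mem _ _ hk)

theorem linearIndependent [LinearOrder α] (hT : LinearIndependent K T) {ι : Type*} {f : ι → V}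
    {φ : ι → κ} (hφ : Function.Injective φ) (h : ∀ i, HasLeadingTerm K T deg (f i) (φ i)) :
    LinearIndependent K f := by
  classical
  rw [linearIndependent_iff']
  intro s g hsum i hi
  by_contra hgi
  obtain ⟨m, hm, hmax⟩ := (s.filter (g · ≠ 0)).exists_max_image (fun j ↦ deg (φ j))
    ⟨i, Finset.mem_filter.2 ⟨hi, hgi⟩⟩
  obtain ⟨hms, hgm⟩ := Finset.mem_filter.1 hm
  let M : Submodule K V := Submodule.span K (T '' {φ m}ᶜ)
  have hlow : lowerSpan K T deg (deg (φ m)) ≤ M :=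
    lowerSpan_le.2 fun k hk ↦ Submodule.subset_span ⟨k, fun hkm ↦ hk.ne (congrArg deg hkm), rfl⟩
  have hrest : ∀ j ∈ s.erase m, g j • f j ∈ M := by
    intro j hj
    obtain ⟨hjm, hjs⟩ := Finset.mem_erase.1 hj
    by_cases hgj : g j = 0
    · simp only [hgj, zero_smul, zero_mem]
    obtain ⟨c, -, hc⟩ := h j
    rw [← sub_add_cancel (f j) (c • T (φ j))]
    have hjT : T (φ j) ∈ M := Submodule.subset_span ⟨φ j, fun hk ↦ hjm (hφ hk), rfl⟩
    have hle : deg (φ j) ≤ deg (φ m) := hmax j (Finset.mem_filter.2 ⟨hjs, hgj⟩)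
    exact M.smul_mem _ (add_mem (hlow (lowerSpan_mono hle hc)) (M.smul_mem _ hjT))
  have hfm : f m ∈ M := by
    rw [← Finset.add_sum_erase s _ hms] at hsum
    rw [← M.smul_mem_iff hgm, eq_neg_of_add_eq_zero_left hsum]
    exact neg_mem (sum_mem hrest)
  obtain ⟨c, hc, hcm⟩ := h m
  have hTm : c • T (φ m) ∈ M := (M.sub_mem_iff_right hfm).1 (hlow hcm)
  exact hT.notMem_span_image (s := {φ m}ᶜ) (fun hmem ↦ hmem rfl) ((M.smul_mem_iff hc).1 hTm)

section Mul

variable {R Λ : Type*} [Ring R] [Algebra K R] {T : Λ → R}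

theorem mul [AddMonoid Λ] {deg : Λ →+ ℤ}
    (hmul : ∀ e f, ∃ c : K, c ≠ 0 ∧ T e * T f = c • T (e + f)) {x y : R} {e f : Λ}
    (hx : HasLeadingTerm K T deg x e) (hy : HasLeadingTerm K T deg y f) :
    HasLeadingTerm K T deg (x * y) (e + f) := by
  obtain ⟨c, hc, hx⟩ := hx
  have hy' : y ∈ lowerSpan K T deg (deg f + 1) := hy.mem_lowerSpan (by omega)
  obtain ⟨d, hd, hy⟩ := hy
  obtain ⟨b, hb, hef⟩ := hmul e f
  have hTe : c • T e ∈ lowerSpan K T deg (deg e + 1) :=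
    Submodule.smul_mem _ _ (apply_mem_lowerSpan (by omega))
  have hsplit : x * y = (c * d * b) • T (e + f)
      + ((x - c • T e) * y + c • T e * (y - d • T f)) := by
    rw [mul_smul, ← hef, ← smul_mul_smul_comm, sub_mul, mul_sub]
    abel
  refine of_eq_smul_add (mul_ne_zero (mul_ne_zero hc hd) hb) hsplit (add_mem ?_ ?_)
  · exact lowerSpan_mono (by rw [map_add]; omega)
      (lowerSpan_mul_lowerSpan_le deg hmul _ _ (Submodule.mul_mem_mul hx hy'))
  · exact lowerSpan_mono (by rw [map_add]; omega)
      (lowerSpan_mul_lowerSpan_le deg hmul _ _ (Submodule.mul_mem_mul hTe hy))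

theorem pow [AddMonoid Λ] {deg : Λ →+ ℤ} (hone : T 0 = 1)
    (hmul : ∀ e f, ∃ c : K, c ≠ 0 ∧ T e * T f = c • T (e + f)) {x : R} {e : Λ}
    (hx : HasLeadingTerm K T deg x e) (n : ℕ) : HasLeadingTerm K T deg (x ^ n) (n • e) := by
  induction n with
  | zero =>
    rw [pow_zero, zero_nsmul, ← hone]
    exact self 0
  | succ n ih =>
    rw [pow_succ, succ_nsmul]
    exact ih.mul hmul hx

theorem units_zpow [AddGroup Λ] {deg : Λ →+ ℤ} (hone : T 0 = 1)
    (hmul : ∀ e f, ∃ c : K, c ≠ 0 ∧ T e * T f = c • T (e + f)) {u : Rˣ} {e : Λ}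
    (hu : (u : R) = T e) (n : ℤ) : HasLeadingTerm K T deg ((u ^ n : Rˣ) : R) (n • e) := by
  have hinv : HasLeadingTerm K T deg ((u⁻¹ : Rˣ) : R) (-e) := by
    obtain ⟨c, hc, he⟩ := hmul e (-e)
    rw [add_neg_cancel, hone, ← hu] at he
    have huT : ((u⁻¹ : Rˣ) : R) = c⁻¹ • T (-e) :=
      Units.inv_eq_of_mul_eq_one_right (by rw [mul_smul_comm, he, inv_smul_smul₀ hc])
    rw [huT]
    exact (self (-e)).const_smul (inv_ne_zero hc)
  cases n with
  | ofNat n =>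
    rw [Int.ofNat_eq_natCast, zpow_natCast, natCast_zsmul, Units.val_pow_eq_pow_val, hu]
    exact (self e).pow hone hmul n
  | negSucc n =>
    rw [zpow_negSucc, negSucc_zsmul, ← inv_pow, ← neg_nsmul, Units.val_pow_eq_pow_val]
    exact hinv.pow hone hmul (n + 1)

end Mul

end HasLeadingTerm

end LeadingTerm

section QuantumTorus

variable {K Λ : Type*} [Field K] [AddCommGroup Λ]

/-- The family `T` satisfies the relations of the quantum torus with parameter `p` and bilinear
form `β` (not necessarily antisymmetric: the `T e` are normally ordered monomials). -/
structure IsQuantumTorus {R : Type*} [Ring R] [Algebra K R] (p : K) (β : Λ →+ Λ →+ ℤ)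
    (T : Λ → R) : Prop where
  apply_zero : T 0 = 1
  apply_mul_apply : ∀ e f, T e * T f = p ^ β e f • T (e + f)

theorem IsQuantumTorus.exists_apply_mul_apply {R : Type*} [Ring R] [Algebra K R] {p : K}
    {β : Λ →+ Λ →+ ℤ} {T : Λ → R} (hT : IsQuantumTorus p β T) (hp : p ≠ 0) (e f : Λ) :
    ∃ c : K, c ≠ 0 ∧ T e * T f = c • T (e + f) :=
  ⟨p ^ β e f, zpow_ne_zero _ hp, hT.apply_mul_apply e f⟩

/-- The `e`-th monomial of the quantum torus, realised as a weighted shift on `Λ →₀ K`. -/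
def torusShift (p : K) (β : Λ →+ Λ →+ ℤ) (e : Λ) : Module.End K (Λ →₀ K) :=
  Finsupp.linearCombination K fun n ↦ Finsupp.single (e + n) (p ^ β e n)

theorem torusShift_single (p : K) (β : Λ →+ Λ →+ ℤ) (e n : Λ) (x : K) :
    torusShift p β e (Finsupp.single n x) = Finsupp.single (e + n) (x * p ^ β e n) := by
  simp [torusShift]

theorem isQuantumTorus_torusShift {p : K} (hp : p ≠ 0) (β : Λ →+ Λ →+ ℤ) :
    IsQuantumTorus p β (torusShift p β) where
  apply_zero := by
    ext n : 2
    simp [torusShift_single]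
  apply_mul_apply e f := by
    refine Finsupp.lhom_ext fun n x ↦ ?_
    have hexp : p ^ β e (f + n) * p ^ β f n = p ^ β (e + f) n * p ^ β e f := by
      simp only [← zpow_add₀ hp, map_add, AddMonoidHom.add_apply]
      ring_nf
    simp only [Module.End.mul_apply, LinearMap.smul_apply, torusShift_single, Finsupp.smul_single,
      smul_eq_mul, add_assoc]
    congr 1
    linear_combination x * hexp

theorem linearIndependent_torusShift (p : K) (β : Λ →+ Λ →+ ℤ) :
    LinearIndependent K (torusShift p β) := by
  refine LinearIndependent.of_comp (LinearMap.applyₗ (Finsupp.single 0 1)) ?_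
  convert Finsupp.linearIndependent_single_one K Λ using 2 with e
  simp [torusShift_single]

end QuantumTorus

section Chart

/-- Exponents of the monomials `a^e₀ b^e₁ p^e₂ u^e₃ s^e₄ Δ^e₅` of the quantum torus that receives
`𝒟q(GL₂)`. -/
abbrev ChartExp : Type := ℤ × ℤ × ℤ × ℤ × ℤ × ℤ

/-- The commutation form of the quantum torus that receives `𝒟q(GL₂)`. -/
def chartForm : ChartExp →+ ChartExp →+ ℤ :=
  AddMonoidHom.mk' (fun e ↦ AddMonoidHom.mk'
    (fun f ↦ -(e.2.1 + e.2.2.1) * f.1 + e.2.2.2.2.1 * f.2.2.2.1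
      + (e.2.2.2.1 + e.2.2.2.2.2) * f.2.2.1)
    (fun f g ↦ by simp only [Prod.fst_add, Prod.snd_add]; ring))
    (fun e f ↦ by
      ext : 1
      simp only [AddMonoidHom.mk'_apply, AddMonoidHom.add_apply, Prod.fst_add, Prod.snd_add]
      ring)

theorem chartForm_mk (a b p u s Δ : ℤ) (f : ChartExp) :
    chartForm (a, b, p, u, s, Δ) f = -(b + p) * f.1 + s * f.2.2.2.1 + (u + Δ) * f.2.2.1 :=
  rfl

/-- The degree on chart exponents that singles out the leading terms of `c₁`, `d₁` and `r`. -/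
def chartDeg : ChartExp →+ ℤ :=
  AddMonoidHom.mk' (fun e ↦ 2 * e.2.1 - e.1 - e.2.2.2.1)
    (fun e f ↦ by simp only [Prod.fst_add, Prod.snd_add]; ring)

theorem chartDeg_mk (a b p u s Δ : ℤ) : chartDeg (a, b, p, u, s, Δ) = 2 * b - a - u :=
  rfl

variable {R : Type*} [Ring R] [Algebra ℂ R]

/-- Images of the generators of `𝒟q(GL₂)` in a quantum torus with monomials `T e`. At `q = 1` it is
the chart in which `A` has second column `(b, a)`, trace `s + u + Δ/u` and determinant `Δ`. -/
def chart (T : ChartExp → R) (q : ℂ) : QLGen → R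
  | .a11 => T (0, 0, 0, 0, 1, 0) + T (0, 0, 0, 1, 0, 0)
      + (q⁻¹ ^ 2) • T (0, 0, 0, -1, 0, 1) - (q⁻¹ ^ 2) • T (1, 0, 0, 0, 0, 0)
  | .a12 => T (0, 1, 0, 0, 0, 0)
  | .a21 => T (1, -1, 0, 0, 1, 0) + T (1, -1, 0, 1, 0, 0)
      + (q⁻¹ ^ 2) • T (1, -1, 0, -1, 0, 1) - T (2, -1, 0, 0, 0, 0)
      - (q⁻¹ ^ 2) • T (0, -1, 0, 0, 0, 1)
  | .a22 => T (1, 0, 0, 0, 0, 0)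
  | .p11 => (q ^ 2) • T (-1, 0, 1, 1, 0, 0) - (q⁻¹ ^ 2) • T (0, 0, 1, 0, 0, 0)
      + (q⁻¹ ^ 6) • T (0, -1, 1, 0, 1, 0) + (q⁻¹ ^ 8) • T (0, -1, 1, -1, 0, 1)
      - (q⁻¹ ^ 6) • T (-1, -1, 1, 0, 0, 1)
  | .p12 => (q ^ 2) • T (-1, 1, 1, 0, 0, 0) - (q⁻¹ ^ 4) • T (-1, 0, 1, 0, 1, 0)
      - (q⁻¹ ^ 6) • T (-1, 0, 1, -1, 0, 1)
  | .p21 => T (0, -1, 1, 1, 0, 0) - (q⁻¹ ^ 2) • T (1, -1, 1, 0, 0, 0)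
  | .p22 => T (0, 0, 1, 0, 0, 0)
  | .ai => T (0, 0, 0, 0, 0, -1)
  | .di => (q ^ 8) • T (1, 1, -2, -1, -1, 0)

/-- The leading exponent of the image of `c₁`. -/
def expC1 : ChartExp := (0, 0, 0, -1, 0, 1)

/-- The exponent of the monomial to which `c₂` maps. -/
def expC2 : ChartExp := (0, 0, 0, 0, 0, 1)

/-- The leading exponent of the image of `r`. -/
def expR : ChartExp := (-1, 0, 1, 1, 1, 0)

/-- The leading exponent of the image of `d₁`. -/
def expD1 : ChartExp := (-1, 0, 1, 1, 0, 0)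

/-- The exponent of the monomial to which `d₂` maps. -/
def expD2 : ChartExp := (-1, -1, 2, 1, 1, 0)

variable {T : ChartExp → R} {q : ℂ}

theorem chart_detA (hq : q ≠ 0) (hT : IsQuantumTorus (q ^ 2) chartForm T) :
    chart T q .a11 * chart T q .a22 - (q ^ 2) • (chart T q .a12 * chart T q .a21) = T expC2 := by
  simp only [chart, expC2, mul_add, add_mul, mul_sub, sub_mul, mul_smul_comm, smul_mul_assoc,
    smul_add, smul_sub, smul_smul, hT.apply_mul_apply, Prod.mk_add_mk, chartForm_mk]
  norm_num
  match_scalars <;> field_simp <;> norm_num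

theorem chart_detD (hq : q ≠ 0) (hT : IsQuantumTorus (q ^ 2) chartForm T) :
    chart T q .p11 * chart T q .p22 - (q ^ 2) • (chart T q .p12 * chart T q .p21) = T expD2 := by
  simp only [chart, expD2, add_mul, mul_sub, sub_mul, mul_smul_comm, smul_mul_assoc,
    smul_sub, smul_smul, hT.apply_mul_apply, Prod.mk_add_mk, chartForm_mk]
  norm_num
  match_scalars <;> field_simp <;> norm_num

set_option maxHeartbeats 1600000 in
-- A cross relation expands into dozens of torus monomials, and there are 28 relations.
theorem lift_chart_eq_of_rel (hq : q ≠ 0) (hT : IsQuantumTorus (q ^ 2) chartForm T) ⦃x y : FQL⦄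
    (h : QLRel q x y) :
    FreeAlgebra.lift ℂ (chart T q) x = FreeAlgebra.lift ℂ (chart T q) y := by
  have hone : T (0, 0, 0, 0, 0, 0) = 1 := hT.apply_zero
  cases h
  case invA1 | invA2 =>
    simp only [gQL, map_mul, map_sub, map_smul, map_one, FreeAlgebra.lift_ι_apply]
    rw [chart_detA hq hT]
    simp only [chart, expC2, hT.apply_mul_apply, chartForm_mk]
    norm_num [hone]
  case invD1 | invD2 =>
    simp only [gQL, map_mul, map_sub, map_smul, map_one, FreeAlgebra.lift_ι_apply]
    rw [chart_detD hq hT]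
    simp only [chart, expD2, smul_mul_assoc, mul_smul_comm, hT.apply_mul_apply, chartForm_mk]
    norm_num [hone, smul_smul]
    field_simp
    norm_num
  all_goals
    simp only [gQL, map_mul, map_add, map_sub, map_neg, map_smul, FreeAlgebra.lift_ι_apply]
    simp only [chart, mul_add, add_mul, mul_sub, sub_mul, mul_smul_comm, smul_mul_assoc, smul_add,
      smul_sub, smul_smul, hT.apply_mul_apply, Prod.mk_add_mk, chartForm_mk]
    norm_num
    try (match_scalars <;> field_simp <;> ring)

/-- The chart as a homomorphism from `𝒟q(GL₂)` to a quantum torus. -/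
def chartHom (hq : q ≠ 0) (hT : IsQuantumTorus (q ^ 2) chartForm T) : DqLoc q →ₐ[ℂ] R :=
  RingQuot.liftAlgHom ℂ ⟨FreeAlgebra.lift ℂ (chart T q), lift_chart_eq_of_rel hq hT⟩

theorem chartHom_mkAlgHom (hq : q ≠ 0) (hT : IsQuantumTorus (q ^ 2) chartForm T) (g : QLGen) :
    chartHom hq hT (RingQuot.mkAlgHom ℂ (QLRel q) (gQL g)) = chart T q g := by
  rw [chartHom, RingQuot.liftAlgHom_mkAlgHom_apply, gQL, FreeAlgebra.lift_ι_apply]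

theorem chartHom_detA (hq : q ≠ 0) (hT : IsQuantumTorus (q ^ 2) chartForm T) :
    chartHom hq hT (detA q) = T expC2 := by
  simp only [detA, a11, a12, a21, a22, map_sub, map_smul, map_mul, chartHom_mkAlgHom]
  exact chart_detA hq hT

theorem chartHom_detD (hq : q ≠ 0) (hT : IsQuantumTorus (q ^ 2) chartForm T) :
    chartHom hq hT (detD q) = T expD2 := by
  simp only [detD, p11, p12, p21, p22, map_sub, map_smul, map_mul, chartHom_mkAlgHom]
  exact chart_detD hq hT

theorem chartHom_c1El (hq : q ≠ 0) (hT : IsQuantumTorus (q ^ 2) chartForm T) :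
    chartHom hq hT (c1El q) =
      (q⁻¹ ^ 2) • T expC1 + (T (0, 0, 0, 0, 1, 0) + T (0, 0, 0, 1, 0, 0)) := by
  simp only [c1El, a11, a22, map_add, map_smul, chartHom_mkAlgHom, chart, expC1]
  module

theorem chartHom_d1El (hq : q ≠ 0) (hT : IsQuantumTorus (q ^ 2) chartForm T) :
    chartHom hq hT (d1El q) =
      (q ^ 2) • T expD1 + ((-q⁻¹ ^ 6) • T (-1, -1, 1, 0, 0, 1)
        + (q⁻¹ ^ 8) • T (0, -1, 1, -1, 0, 1) + (q⁻¹ ^ 6) • T (0, -1, 1, 0, 1, 0)) := by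
  simp only [d1El, p11, p22, map_add, map_smul, chartHom_mkAlgHom, chart, expD1]
  module

theorem chartHom_rEl (hq : q ≠ 0) (hT : IsQuantumTorus (q ^ 2) chartForm T) :
    chartHom hq hT (rEl q) =
      (q ^ 4) • T expR + ((q ^ 4) • T (-1, 0, 1, 2, 0, 0)
        + (-q⁻¹ ^ 4) • T (-1, -1, 1, 1, 0, 1) + (q⁻¹ ^ 6) • T (0, -1, 1, 0, 0, 1)) := by
  simp only [rEl, Dmat, Amat, Matrix.mul_fin_two, Matrix.cons_val_zero, Matrix.cons_val_one,
    Matrix.of_apply, a11, a12, a21, a22, p11, p12, p21, p22, map_add, map_smul, map_mul,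
    chartHom_mkAlgHom]
  simp only [chart, expR, mul_add, add_mul, mul_sub, sub_mul, mul_smul_comm, smul_mul_assoc,
    smul_add, smul_sub, smul_smul, hT.apply_mul_apply, Prod.mk_add_mk, chartForm_mk]
  norm_num
  match_scalars <;> field_simp <;> ring

theorem hasLeadingTerm_c1El (hq : q ≠ 0) (hT : IsQuantumTorus (q ^ 2) chartForm T) :
    HasLeadingTerm ℂ T chartDeg (chartHom hq hT (c1El q)) expC1 := by
  refine .of_eq_smul_add (by positivity) (chartHom_c1El hq hT) (add_mem ?_ ?_)
  all_goals exact apply_mem_lowerSpan (by simp [chartDeg_mk, expC1])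

theorem hasLeadingTerm_d1El (hq : q ≠ 0) (hT : IsQuantumTorus (q ^ 2) chartForm T) :
    HasLeadingTerm ℂ T chartDeg (chartHom hq hT (d1El q)) expD1 := by
  refine .of_eq_smul_add (pow_ne_zero 2 hq) (chartHom_d1El hq hT) (add_mem (add_mem ?_ ?_) ?_)
  all_goals exact Submodule.smul_mem _ _ (apply_mem_lowerSpan (by simp [chartDeg_mk, expD1]))

theorem hasLeadingTerm_rEl (hq : q ≠ 0) (hT : IsQuantumTorus (q ^ 2) chartForm T) :
    HasLeadingTerm ℂ T chartDeg (chartHom hq hT (rEl q)) expR := by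
  refine .of_eq_smul_add (pow_ne_zero 4 hq) (chartHom_rEl hq hT) (add_mem (add_mem ?_ ?_) ?_)
  all_goals exact Submodule.smul_mem _ _ (apply_mem_lowerSpan (by simp [chartDeg_mk, expR]))

end Chart

section QCommute

variable (K : Type*) [Field K] {R : Type*} [Ring R] [Algebra K R]

/-- `y` and `x` `q`-commute: `y * x` and `x * y` agree up to a nonzero scalar of `K`, which is left
unspecified. -/
def QCommute (y x : R) : Prop :=
  ∃ s : K, s ≠ 0 ∧ y * x = s • (x * y)

variable {K} {x y z : R}

namespace QCommute

theorem one_right (y : R) : QCommute K y 1 :=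
  ⟨1, one_ne_zero, by rw [mul_one, one_mul, one_smul]⟩

theorem symm (h : QCommute K y x) : QCommute K x y := by
  obtain ⟨s, hs, h⟩ := h
  exact ⟨s⁻¹, inv_ne_zero hs, by rw [h, inv_smul_smul₀ hs]⟩

theorem mul_right (hx : QCommute K y x) (hz : QCommute K y z) : QCommute K y (x * z) := by
  obtain ⟨s, hs, hx⟩ := hx
  obtain ⟨t, ht, hz⟩ := hz
  refine ⟨s * t, mul_ne_zero hs ht, ?_⟩
  rw [← mul_assoc, hx, smul_mul_assoc, mul_assoc, hz, mul_smul_comm, smul_smul, mul_assoc]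

theorem pow_right (h : QCommute K y x) (n : ℕ) : QCommute K y (x ^ n) := by
  induction n with
  | zero => rw [pow_zero]; exact one_right y
  | succ n ih => rw [pow_succ]; exact ih.mul_right h

theorem units_inv_right {u : Rˣ} (h : QCommute K y u) : QCommute K y ((u⁻¹ : Rˣ) : R) := by
  obtain ⟨s, hs, h⟩ := h.symm
  refine ⟨s, hs, ?_⟩
  rw [Units.mul_inv_eq_iff_eq_mul, smul_mul_assoc, mul_assoc, ← mul_smul_comm, ← h,
    Units.inv_mul_cancel_left]

theorem units_zpow_right {u : Rˣ} (h : QCommute K y u) (n : ℤ) :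
    QCommute K y ((u ^ n : Rˣ) : R) := by
  cases n with
  | ofNat n =>
    rw [Int.ofNat_eq_natCast, zpow_natCast, Units.val_pow_eq_pow_val]
    exact h.pow_right n
  | negSucc n =>
    rw [zpow_negSucc, ← inv_pow, Units.val_pow_eq_pow_val]
    exact h.units_inv_right.pow_right (n + 1)

end QCommute

end QCommute

section Generation

variable {K R : Type*} [CommSemiring K]

theorem submodule_eq_top_of_adjoin_eq_top [Semiring R] [Algebra K R] {s : Set R}
    (hs : Algebra.adjoin K s = ⊤) {M : Submodule K R} (hone : 1 ∈ M)
    (hmul : ∀ x ∈ s, ∀ v ∈ M, x * v ∈ M) : M = ⊤ := by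
  have hstable : ∀ y : R, ∀ v ∈ M, y * v ∈ M := by
    intro y
    have hy : y ∈ Algebra.adjoin K s := hs ▸ Algebra.mem_top
    induction hy using Algebra.adjoin_induction with
    | mem x hx => exact hmul x hx
    | algebraMap c =>
      intro v hv
      rw [← Algebra.smul_def]
      exact M.smul_mem c hv
    | add x y _ _ hx hy =>
      intro v hv
      rw [add_mul]
      exact add_mem (hx v hv) (hy v hv)
    | mul x y _ _ hx hy =>
      intro v hv
      rw [mul_assoc]
      exact hx _ (hy v hv)
  exact M.eq_top_iff'.2 fun y ↦ mul_one y ▸ hstable y 1 hone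

theorem adjoin_range_mkAlgHom_ι {X : Type*} (rel : FreeAlgebra K X → FreeAlgebra K X → Prop) :
    Algebra.adjoin K (Set.range (RingQuot.mkAlgHom K rel ∘ FreeAlgebra.ι K)) = ⊤ := by
  rw [Set.range_comp, ← AlgHom.map_adjoin, FreeAlgebra.adjoin_range_ι, Algebra.map_top,
    AlgHom.range_eq_top]
  exact RingQuot.mkAlgHom_surjective K rel

end Generation

section AlgB

theorem zp_units {M : Type*} [Monoid M] (u : Mˣ) (k : ℤ) :
    zp (u : M) ((u⁻¹ : Mˣ) : M) k = ((u ^ k : Mˣ) : M) := by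
  cases k with
  | ofNat n => rw [zp, Int.ofNat_eq_natCast, zpow_natCast, Units.val_pow_eq_pow_val]
  | negSucc n => rw [zp, zpow_negSucc, ← inv_pow, Units.val_pow_eq_pow_val]

variable (q : ℂ)

/-- The generator `c₂` as a unit of `ℬ`. -/
def c2Unit : (AlgB q)ˣ where
  val := bc2 q
  inv := bc2i q
  val_inv := by
    simpa only [bc2, bc2i, map_mul, map_one] using
      RingQuot.mkAlgHom_rel ℂ (BRel.c2c2i (q := q))
  inv_val := by
    simpa only [bc2, bc2i, map_mul, map_one] using
      RingQuot.mkAlgHom_rel ℂ (BRel.c2ic2 (q := q))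

/-- The generator `d₂` as a unit of `ℬ`. -/
def d2Unit : (AlgB q)ˣ where
  val := bd2 q
  inv := bd2i q
  val_inv := by
    simpa only [bd2, bd2i, map_mul, map_one] using
      RingQuot.mkAlgHom_rel ℂ (BRel.d2d2i (q := q))
  inv_val := by
    simpa only [bd2, bd2i, map_mul, map_one] using
      RingQuot.mkAlgHom_rel ℂ (BRel.d2id2 (q := q))

theorem val_c2Unit : (c2Unit q : AlgB q) = bc2 q :=
  rfl

theorem val_d2Unit : (d2Unit q : AlgB q) = bd2 q :=
  rfl

theorem commute_bc1_c2Unit : Commute (bc1 q) (c2Unit q) := by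
  simpa only [commute_iff_eq, bc1, val_c2Unit, bc2, map_mul] using
    (RingQuot.mkAlgHom_rel ℂ (BRel.c2c1 (q := q))).symm

theorem commute_bd1_d2Unit : Commute (bd1 q) (d2Unit q) := by
  simpa only [commute_iff_eq, bd1, val_d2Unit, bd2, map_mul] using
    (RingQuot.mkAlgHom_rel ℂ (BRel.d2d1 (q := q))).symm

theorem bd1_mul_bc1 : bd1 q * bc1 q = bc1 q * bd1 q + (q⁻¹ ^ 2 - 1) • br q := by
  simpa only [bc1, bd1, br, map_mul, map_add, map_smul] using
    RingQuot.mkAlgHom_rel ℂ (BRel.d1c1 (q := q))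

theorem bd1_mul_br : bd1 q * br q =
    (q⁻¹ ^ 2) • (br q * bd1 q) + ((1 - q⁻¹ ^ 2) * q⁻¹ ^ 2) • (bc1 q * d2Unit q) := by
  simpa only [bc1, bd1, br, val_d2Unit, bd2, map_mul, map_add, map_smul] using
    RingQuot.mkAlgHom_rel ℂ (BRel.d1r (q := q))

theorem br_mul_bc1 : br q * bc1 q =
    (q⁻¹ ^ 2) • (bc1 q * br q) + ((1 - q⁻¹ ^ 2) * q⁻¹ ^ 2) • (c2Unit q * bd1 q) := by
  simpa only [bc1, bd1, br, val_c2Unit, bc2, map_mul, map_add, map_smul] using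
    RingQuot.mkAlgHom_rel ℂ (BRel.rc1 (q := q))

theorem br_mul_br : br q * br q =
    (q⁻¹ ^ 4) • bw q + (q⁻¹ ^ 4 + q⁻¹ ^ 6) • (c2Unit q * d2Unit q)
      - (q⁻¹ ^ 4) • (c2Unit q * bd1 q * bd1 q) - (q⁻¹ ^ 4) • (bc1 q * bc1 q * d2Unit q)
      + (q⁻¹ ^ 2) • (bc1 q * br q * bd1 q) := by
  simpa only [bc1, bd1, br, bw, val_c2Unit, bc2, val_d2Unit, bd2, map_mul, map_add, map_sub,
    map_smul] using
      RingQuot.mkAlgHom_rel ℂ (BRel.rr (q := q))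

variable {q}

theorem bw_eq (hq : q ≠ 0) : bw q =
    (q ^ 4) • (br q * br q) - (1 + q⁻¹ ^ 2) • (c2Unit q * d2Unit q : AlgB q)
      + c2Unit q * (bd1 q * bd1 q) + bc1 q * (bc1 q * d2Unit q)
      - (q ^ 2) • (bc1 q * (br q * bd1 q)) := by
  rw [br_mul_br]
  simp only [mul_assoc]
  match_scalars <;> field_simp <;> ring

theorem qCommute_d2Unit_bc1 (hq : q ≠ 0) : QCommute ℂ (d2Unit q : AlgB q) (bc1 q) :=
  ⟨q⁻¹ ^ 2, pow_ne_zero _ (inv_ne_zero hq), by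
    simpa only [bc1, val_d2Unit, bd2, map_mul, map_smul] using
      RingQuot.mkAlgHom_rel ℂ (BRel.d2c1 (q := q))⟩

theorem qCommute_d2Unit_c2Unit (hq : q ≠ 0) :
    QCommute ℂ (d2Unit q : AlgB q) (c2Unit q : AlgB q) :=
  ⟨q⁻¹ ^ 4, pow_ne_zero _ (inv_ne_zero hq), by
    simpa only [val_c2Unit, bc2, val_d2Unit, bd2, map_mul, map_smul] using
      RingQuot.mkAlgHom_rel ℂ (BRel.d2c2 (q := q))⟩

theorem qCommute_d2Unit_br (hq : q ≠ 0) : QCommute ℂ (d2Unit q : AlgB q) (br q) :=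
  ⟨q⁻¹ ^ 2, pow_ne_zero _ (inv_ne_zero hq), by
    simpa only [br, val_d2Unit, bd2, map_mul, map_smul] using
      RingQuot.mkAlgHom_rel ℂ (BRel.d2r (q := q))⟩

theorem qCommute_bd1_c2Unit (hq : q ≠ 0) : QCommute ℂ (bd1 q) (c2Unit q : AlgB q) :=
  ⟨q⁻¹ ^ 2, pow_ne_zero _ (inv_ne_zero hq), by
    simpa only [bd1, val_c2Unit, bc2, map_mul, map_smul] using
      RingQuot.mkAlgHom_rel ℂ (BRel.d1c2 (q := q))⟩

theorem qCommute_br_c2Unit (hq : q ≠ 0) : QCommute ℂ (br q) (c2Unit q : AlgB q) :=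
  ⟨q⁻¹ ^ 2, pow_ne_zero _ (inv_ne_zero hq), by
    simpa only [br, val_c2Unit, bc2, map_mul, map_smul] using
      RingQuot.mkAlgHom_rel ℂ (BRel.rc2 (q := q))⟩

theorem qCommute_bw_bc1 (hq : q ≠ 0) : QCommute ℂ (bw q) (bc1 q) :=
  ⟨q⁻¹ ^ 2, pow_ne_zero _ (inv_ne_zero hq), by
    simpa only [bw, bc1, map_mul, map_smul] using RingQuot.mkAlgHom_rel ℂ (BRel.wc1 (q := q))⟩

theorem qCommute_bw_c2Unit (hq : q ≠ 0) : QCommute ℂ (bw q) (c2Unit q : AlgB q) :=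
  ⟨q⁻¹ ^ 4, pow_ne_zero _ (inv_ne_zero hq), by
    simpa only [bw, val_c2Unit, bc2, map_mul, map_smul] using
      RingQuot.mkAlgHom_rel ℂ (BRel.wc2 (q := q))⟩

theorem qCommute_bw_br : QCommute ℂ (bw q) (br q) :=
  ⟨1, one_ne_zero, by
    simpa only [bw, br, map_mul, one_smul] using RingQuot.mkAlgHom_rel ℂ (BRel.wr (q := q))⟩

theorem qCommute_bw_bd1 (hq : q ≠ 0) : QCommute ℂ (bw q) (bd1 q) :=
  ⟨q ^ 2, pow_ne_zero _ hq, by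
    simpa only [bw, bd1, map_mul, map_smul] using RingQuot.mkAlgHom_rel ℂ (BRel.wd1 (q := q))⟩

theorem qCommute_bw_d2Unit (hq : q ≠ 0) : QCommute ℂ (bw q) (d2Unit q : AlgB q) :=
  ⟨q ^ 4, pow_ne_zero _ hq, by
    simpa only [bw, val_d2Unit, bd2, map_mul, map_smul] using
      RingQuot.mkAlgHom_rel ℂ (BRel.wd2 (q := q))⟩

end AlgB

section RMonomial

/-- Exponents of the monomials `c₁^a c₂^k r^n d₁^b d₂^l`. -/
abbrev RExp : Type := ℕ × ℤ × ℕ × ℕ × ℤ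

/-- The degree in `r`. -/
def rDeg (x : RExp) : ℕ := x.2.2.1

/-- The monomial `d₁^b d₂^l`. -/
def dMonomial (q : ℂ) (b : ℕ) (l : ℤ) : AlgB q := bd1 q ^ b * ((d2Unit q ^ l : (AlgB q)ˣ) : AlgB q)

/-- The monomials `c₁^a c₂^k r^n d₁^b d₂^l` of `ℬ`. They trade `w` for arbitrary powers of `r` and
turn out to be a basis of `ℬ`. -/
def rMonomial (q : ℂ) (x : RExp) : AlgB q :=
  bc1 q ^ x.1 * (((c2Unit q ^ x.2.1 : (AlgB q)ˣ) : AlgB q) *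
    (br q ^ x.2.2.1 * dMonomial q x.2.2.2.1 x.2.2.2.2))

/-- The filtration of `ℬ` by degree in `r`: the span of the monomials of degree less than `n`. -/
abbrev rFiltration (q : ℂ) (n : ℕ) : Submodule ℂ (AlgB q) :=
  lowerSpan ℂ (rMonomial q) rDeg n

variable {q : ℂ} {n : ℕ} {v : AlgB q}

theorem bd1_mul_dMonomial (b : ℕ) (l : ℤ) : bd1 q * dMonomial q b l = dMonomial q (b + 1) l := by
  rw [dMonomial, ← mul_assoc, ← pow_succ', dMonomial]

theorem d2Unit_zpow_mul_dMonomial (j : ℤ) (b : ℕ) (l : ℤ) :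
    ((d2Unit q ^ j : (AlgB q)ˣ) : AlgB q) * dMonomial q b l = dMonomial q b (j + l) := by
  have hcomm : Commute ((d2Unit q ^ j : (AlgB q)ˣ) : AlgB q) (bd1 q ^ b) :=
    ((commute_bd1_d2Unit q).units_zpow_right j).symm.pow_right b
  rw [dMonomial, dMonomial, ← mul_assoc, hcomm.eq, mul_assoc, zpow_add, Units.val_mul]

theorem bc1_mul_rMonomial (a : ℕ) (k : ℤ) (n b : ℕ) (l : ℤ) :
    bc1 q * rMonomial q (a, k, n, b, l) = rMonomial q (a + 1, k, n, b, l) := by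
  rw [rMonomial, ← mul_assoc, ← pow_succ', rMonomial]

theorem c2Unit_zpow_mul_rMonomial (j : ℤ) (a : ℕ) (k : ℤ) (n b : ℕ) (l : ℤ) :
    ((c2Unit q ^ j : (AlgB q)ˣ) : AlgB q) * rMonomial q (a, k, n, b, l) =
      rMonomial q (a, j + k, n, b, l) := by
  have hcomm : Commute ((c2Unit q ^ j : (AlgB q)ˣ) : AlgB q) (bc1 q ^ a) :=
    ((commute_bc1_c2Unit q).units_zpow_right j).symm.pow_right a
  rw [rMonomial, rMonomial, ← mul_assoc, hcomm.eq, mul_assoc, ← mul_assoc (_ ^ j : (AlgB q)ˣ).val,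
    ← Units.val_mul, ← zpow_add]

theorem exists_d2Unit_zpow_mul_rMonomial (hq : q ≠ 0) (j : ℤ) (a : ℕ) (k : ℤ) (n b : ℕ) (l : ℤ) :
    ∃ s : ℂ, ((d2Unit q ^ j : (AlgB q)ˣ) : AlgB q) * rMonomial q (a, k, n, b, l) =
      s • rMonomial q (a, k, n, b, j + l) := by
  have hc1 := ((qCommute_d2Unit_bc1 hq).symm.units_zpow_right j).symm
  have hc2 := ((qCommute_d2Unit_c2Unit hq).symm.units_zpow_right j).symm
  have hr := ((qCommute_d2Unit_br hq).symm.units_zpow_right j).symm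
  obtain ⟨s, -, hs⟩ :=
    (hc1.pow_right a).mul_right ((hc2.units_zpow_right k).mul_right (hr.pow_right n))
  refine ⟨s, ?_⟩
  simp only [rMonomial, ← d2Unit_zpow_mul_dMonomial j b l, ← mul_assoc, ← smul_mul_assoc] at hs ⊢
  rw [hs]

theorem br_pow_mul_dMonomial (n b : ℕ) (l : ℤ) :
    br q ^ n * dMonomial q b l = rMonomial q (0, 0, n, b, l) := by
  rw [rMonomial, pow_zero, zpow_zero, Units.val_one, one_mul, one_mul]

theorem bc1_mul_mem_rFiltration (hv : v ∈ rFiltration q n) : bc1 q * v ∈ rFiltration q n := by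
  refine map_mem_of_mem_lowerSpan (f := LinearMap.mulLeft ℂ (bc1 q)) ?_ hv
  rintro ⟨a, k, m, b, l⟩ hm
  rw [LinearMap.mulLeft_apply, bc1_mul_rMonomial]
  exact apply_mem_lowerSpan hm

theorem c2Unit_zpow_mul_mem_rFiltration (j : ℤ) (hv : v ∈ rFiltration q n) :
    ((c2Unit q ^ j : (AlgB q)ˣ) : AlgB q) * v ∈ rFiltration q n := by
  refine map_mem_of_mem_lowerSpan (f := LinearMap.mulLeft ℂ _) ?_ hv
  rintro ⟨a, k, m, b, l⟩ hm
  rw [LinearMap.mulLeft_apply, c2Unit_zpow_mul_rMonomial]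
  exact apply_mem_lowerSpan hm

theorem d2Unit_zpow_mul_mem_rFiltration (hq : q ≠ 0) (j : ℤ) (hv : v ∈ rFiltration q n) :
    ((d2Unit q ^ j : (AlgB q)ˣ) : AlgB q) * v ∈ rFiltration q n := by
  refine map_mem_of_mem_lowerSpan (f := LinearMap.mulLeft ℂ _) ?_ hv
  rintro ⟨a, k, m, b, l⟩ hm
  obtain ⟨s, hs⟩ := exists_d2Unit_zpow_mul_rMonomial hq j a k m b l
  rw [LinearMap.mulLeft_apply, hs]
  exact Submodule.smul_mem _ s (apply_mem_lowerSpan hm)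

theorem br_bd1_mul_rMonomial_mem (hq : q ≠ 0)
    (hd1 : ∀ b l, bd1 q * (br q ^ n * dMonomial q b l) ∈ rFiltration q (n + 1))
    (a : ℕ) (k : ℤ) (b : ℕ) (l : ℤ) :
    br q * rMonomial q (a, k, n, b, l) ∈ rFiltration q (n + 2) ∧
      bd1 q * rMonomial q (a, k, n, b, l) ∈ rFiltration q (n + 2) := by
  induction a with
  | zero =>
    obtain ⟨s, -, hr⟩ := (qCommute_br_c2Unit hq).units_zpow_right k
    obtain ⟨t, -, hd⟩ := (qCommute_bd1_c2Unit hq).units_zpow_right k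
    simp only [rMonomial, pow_zero, one_mul]
    constructor
    · rw [← mul_assoc, hr, smul_mul_assoc, mul_assoc, ← mul_assoc (br q), ← pow_succ',
        br_pow_mul_dMonomial]
      exact Submodule.smul_mem _ _ (c2Unit_zpow_mul_mem_rFiltration k
        (apply_mem_lowerSpan (Nat.lt_succ_self (n + 1))))
    · rw [← mul_assoc, hd, smul_mul_assoc, mul_assoc]
      exact Submodule.smul_mem _ _ (c2Unit_zpow_mul_mem_rFiltration k
        (lowerSpan_mono (Nat.le_succ (n + 1)) (hd1 b l)))
  | succ a ih =>
    obtain ⟨ihr, ihd⟩ := ih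
    rw [← bc1_mul_rMonomial]
    constructor
    · rw [← mul_assoc, br_mul_bc1, add_mul, smul_mul_assoc, smul_mul_assoc, mul_assoc, mul_assoc,
        ← zpow_one (c2Unit q)]
      exact add_mem (Submodule.smul_mem _ _ (bc1_mul_mem_rFiltration ihr))
        (Submodule.smul_mem _ _ (c2Unit_zpow_mul_mem_rFiltration 1 ihd))
    · rw [← mul_assoc, bd1_mul_bc1, add_mul, smul_mul_assoc, mul_assoc]
      exact add_mem (bc1_mul_mem_rFiltration ihd) (Submodule.smul_mem _ _ ihr)

theorem bd1_mul_br_pow_mul_dMonomial_mem (hq : q ≠ 0) (n b : ℕ) (l : ℤ) :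
    bd1 q * (br q ^ n * dMonomial q b l) ∈ rFiltration q (n + 1) := by
  induction n using Nat.strong_induction_on generalizing b l with
  | _ n ih =>
    cases n with
    | zero =>
      rw [pow_zero, one_mul, bd1_mul_dMonomial, ← one_mul (dMonomial q _ _), ← pow_zero (br q),
        br_pow_mul_dMonomial]
      exact apply_mem_lowerSpan Nat.zero_lt_one
    | succ n =>
      have hr : br q * (bd1 q * (br q ^ n * dMonomial q b l)) ∈ rFiltration q (n + 1 + 1) := by
        refine map_mem_of_mem_lowerSpan (f := LinearMap.mulLeft ℂ (br q)) ?_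
          (ih n n.lt_succ_self b l)
        rintro ⟨a, k, m, b', l'⟩ (hm : m < n + 1)
        exact lowerSpan_mono (by omega) (br_bd1_mul_rMonomial_mem hq (ih m hm) a k b' l').1
      have hc1 : bc1 q * (d2Unit q * (br q ^ n * dMonomial q b l)) ∈
          rFiltration q (n + 1 + 1) := by
        rw [← zpow_one (d2Unit q), br_pow_mul_dMonomial]
        exact bc1_mul_mem_rFiltration (d2Unit_zpow_mul_mem_rFiltration hq 1
          (apply_mem_lowerSpan (show n < n + 1 + 1 by omega)))
      rw [pow_succ', mul_assoc, ← mul_assoc (bd1 q), bd1_mul_br, add_mul, smul_mul_assoc,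
        smul_mul_assoc, mul_assoc, mul_assoc]
      exact add_mem (Submodule.smul_mem _ _ hr) (Submodule.smul_mem _ _ hc1)

theorem br_mul_mem_rFiltration (hq : q ≠ 0) (hv : v ∈ rFiltration q n) :
    br q * v ∈ rFiltration q (n + 1) := by
  refine map_mem_of_mem_lowerSpan (f := LinearMap.mulLeft ℂ (br q)) ?_ hv
  rintro ⟨a, k, m, b, l⟩ (hm : m < n)
  exact lowerSpan_mono (by omega)
    (br_bd1_mul_rMonomial_mem hq (bd1_mul_br_pow_mul_dMonomial_mem hq m) a k b l).1

theorem bd1_mul_mem_rFiltration (hq : q ≠ 0) (hv : v ∈ rFiltration q n) :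
    bd1 q * v ∈ rFiltration q (n + 1) := by
  refine map_mem_of_mem_lowerSpan (f := LinearMap.mulLeft ℂ (bd1 q)) ?_ hv
  rintro ⟨a, k, m, b, l⟩ (hm : m < n)
  exact lowerSpan_mono (by omega)
    (br_bd1_mul_rMonomial_mem hq (bd1_mul_br_pow_mul_dMonomial_mem hq m) a k b l).2

theorem hasLeadingTerm_bw_mul_dMonomial (hq : q ≠ 0) (b : ℕ) (l : ℤ) :
    HasLeadingTerm ℂ (rMonomial q) rDeg (bw q * dMonomial q b l) (0, 0, 2, b, l) := by
  have hw : bw q * dMonomial q b l = (q ^ 4) • rMonomial q (0, 0, 2, b, l)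
      + (-(1 + q⁻¹ ^ 2) • rMonomial q (0, 1, 0, b, 1 + l) + rMonomial q (0, 1, 0, b + 1 + 1, l)
        + rMonomial q (2, 0, 0, b, 1 + l) + (-q ^ 2) • rMonomial q (1, 0, 1, b + 1, l)) := by
    simp only [rMonomial, bw_eq hq, add_mul, sub_mul, smul_mul_assoc, pow_zero, pow_one, zpow_zero,
      zpow_one, Units.val_one, one_mul, pow_two (bc1 q), pow_two (br q), ← bd1_mul_dMonomial,
      ← d2Unit_zpow_mul_dMonomial, mul_assoc]
    module
  refine .of_eq_smul_add (pow_ne_zero 4 hq) hw (add_mem (add_mem (add_mem ?_ ?_) ?_) ?_)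
  · exact Submodule.smul_mem _ _ (apply_mem_lowerSpan Nat.zero_lt_two)
  · exact apply_mem_lowerSpan Nat.zero_lt_two
  · exact apply_mem_lowerSpan Nat.zero_lt_two
  · exact Submodule.smul_mem _ _ (apply_mem_lowerSpan Nat.one_lt_two)

theorem bc1_pow_mul_mem_rFiltration (a : ℕ) (hv : v ∈ rFiltration q n) :
    bc1 q ^ a * v ∈ rFiltration q n := by
  induction a with
  | zero => rwa [pow_zero, one_mul]
  | succ a ih => rw [pow_succ', mul_assoc]; exact bc1_mul_mem_rFiltration ih

theorem br_pow_mul_mem_rFiltration (hq : q ≠ 0) (m : ℕ) (hv : v ∈ rFiltration q n) :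
    br q ^ m * v ∈ rFiltration q (m + n) := by
  induction m with
  | zero => rwa [pow_zero, one_mul, zero_add]
  | succ m ih =>
    rw [pow_succ', mul_assoc, Nat.succ_add]
    exact br_mul_mem_rFiltration hq ih

theorem hasLeadingTerm_bw_mul_rMonomial (hq : q ≠ 0) (a : ℕ) (k : ℤ) (n b : ℕ) (l : ℤ) :
    HasLeadingTerm ℂ (rMonomial q) rDeg (bw q * rMonomial q (a, k, n, b, l))
      (a, k, n + 2, b, l) := by
  let y : AlgB q := bc1 q ^ a * (((c2Unit q ^ k : (AlgB q)ˣ) : AlgB q) * br q ^ n)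
  obtain ⟨s, hs, hwy⟩ : QCommute ℂ (bw q) y := ((qCommute_bw_bc1 hq).pow_right a).mul_right
    (((qCommute_bw_c2Unit hq).units_zpow_right k).mul_right (qCommute_bw_br.pow_right n))
  have hw : bw q * rMonomial q (a, k, n, b, l) = s • (y * (bw q * dMonomial q b l)) := by
    have hy : rMonomial q (a, k, n, b, l) = y * dMonomial q b l := by
      simp only [y, rMonomial, mul_assoc]
    rw [hy, ← mul_assoc, hwy, smul_mul_assoc, mul_assoc]
  rw [hw]
  refine .const_smul hs ((hasLeadingTerm_bw_mul_dMonomial hq b l).map (LinearMap.mulLeft ℂ y)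
    (fun u hu ↦ ?_) ?_)
  · rw [LinearMap.mulLeft_apply, mul_assoc, mul_assoc]
    exact bc1_pow_mul_mem_rFiltration a (c2Unit_zpow_mul_mem_rFiltration k
      (br_pow_mul_mem_rFiltration hq n hu))
  · have hy : y * rMonomial q (0, 0, 2, b, l) = rMonomial q (a, k, n + 2, b, l) := by
      rw [← br_pow_mul_dMonomial]
      simp only [y, rMonomial, pow_add, mul_assoc]
    rw [LinearMap.mulLeft_apply, hy]
    exact .self _

theorem bw_mul_mem_rFiltration (hq : q ≠ 0) (hv : v ∈ rFiltration q n) :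
    bw q * v ∈ rFiltration q (n + 2) := by
  refine map_mem_of_mem_lowerSpan (f := LinearMap.mulLeft ℂ (bw q)) ?_ hv
  rintro ⟨a, k, m, b, l⟩ (hm : m < n)
  have hdeg : rDeg (a, k, m + 2, b, l) < n + 2 := show m + 2 < n + 2 by omega
  exact (hasLeadingTerm_bw_mul_rMonomial hq a k m b l).mem_lowerSpan hdeg

theorem hasLeadingTerm_bw_pow_mul_rMonomial (hq : q ≠ 0) (a : ℕ) (k : ℤ) (n b : ℕ) (l : ℤ)
    (c : ℕ) :
    HasLeadingTerm ℂ (rMonomial q) rDeg (bw q ^ c * rMonomial q (a, k, n, b, l))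
      (a, k, n + 2 * c, b, l) := by
  induction c with
  | zero => rw [pow_zero, one_mul]; exact .self _
  | succ c ih =>
    rw [pow_succ', mul_assoc, Nat.mul_succ, ← Nat.add_assoc]
    generalize n + 2 * c = m at ih ⊢
    refine ih.map (LinearMap.mulLeft ℂ (bw q)) (fun u hu ↦ ?_)
      (hasLeadingTerm_bw_mul_rMonomial hq a k m b l)
    exact bw_mul_mem_rFiltration hq hu

/-- The exponent of the leading monomial of a PBW monomial; each `w` contributes `r²`. -/
def pbwLeadingExp (x : ℕ × ℤ × Fin 2 × ℕ × ℤ × ℕ) : RExp :=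
  (x.1, x.2.1, x.2.2.1 + 2 * x.2.2.2.2.2, x.2.2.2.1, x.2.2.2.2.1)

theorem pbwLeadingExp_injective : Function.Injective pbwLeadingExp := by
  rintro ⟨a, k, ε, b, l, c⟩ ⟨a', k', ε', b', l', c'⟩ h
  simp only [pbwLeadingExp, Prod.mk.injEq] at h
  simp only [Prod.mk.injEq, Fin.ext_iff]
  omega

theorem hasLeadingTerm_pbwB (hq : q ≠ 0) (x : ℕ × ℤ × Fin 2 × ℕ × ℤ × ℕ) :
    HasLeadingTerm ℂ (rMonomial q) rDeg (pbwB q x) (pbwLeadingExp x) := by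
  obtain ⟨a, k, ε, b, l, c⟩ := x
  have hw : QCommute ℂ (bw q) (rMonomial q (a, k, ε, b, l)) :=
    ((qCommute_bw_bc1 hq).pow_right a).mul_right
      (((qCommute_bw_c2Unit hq).units_zpow_right k).mul_right
        ((qCommute_bw_br.pow_right ε).mul_right
          (((qCommute_bw_bd1 hq).pow_right b).mul_right
            ((qCommute_bw_d2Unit hq).units_zpow_right l))))
  obtain ⟨s, hs, hsw⟩ := hw.symm.pow_right c
  have hpbw : pbwB q (a, k, ε, b, l, c) = s • (bw q ^ c * rMonomial q (a, k, ε, b, l)) := by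
    rw [← hsw, rMonomial, dMonomial, ← zp_units, ← zp_units]
    simp only [pbwB, mul_assoc]
    rfl
  rw [hpbw]
  exact (hasLeadingTerm_bw_pow_mul_rMonomial hq a k ε b l c).const_smul hs

theorem rFiltration_le_span_range (n : ℕ) :
    rFiltration q n ≤ Submodule.span ℂ (Set.range (rMonomial q)) :=
  Submodule.span_mono (Set.image_subset_range _ _)

theorem mul_mem_span_range_rMonomial {y : AlgB q} {i : ℕ}
    (hy : ∀ n, ∀ v ∈ rFiltration q n, y * v ∈ rFiltration q (n + i))
    (hv : v ∈ Submodule.span ℂ (Set.range (rMonomial q))) :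
    y * v ∈ Submodule.span ℂ (Set.range (rMonomial q)) := by
  refine (Submodule.span_le
    (p := (Submodule.span ℂ (Set.range (rMonomial q))).comap (LinearMap.mulLeft ℂ y))).2 ?_ hv
  rintro _ ⟨x, rfl⟩
  exact rFiltration_le_span_range _ (hy _ _ (apply_mem_lowerSpan (rDeg x).lt_succ_self))

theorem span_range_rMonomial (hq : q ≠ 0) :
    Submodule.span ℂ (Set.range (rMonomial q)) = ⊤ := by
  refine submodule_eq_top_of_adjoin_eq_top (adjoin_range_mkAlgHom_ι (BRel q)) ?_ ?_
  · refine Submodule.subset_span ⟨0, ?_⟩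
    simp [rMonomial, dMonomial]
  rintro _ ⟨g, rfl⟩ v hv
  have hc2 (j : ℤ) := mul_mem_span_range_rMonomial (i := 0)
    (fun _ _ ↦ c2Unit_zpow_mul_mem_rFiltration (q := q) j) hv
  have hd2 (j : ℤ) := mul_mem_span_range_rMonomial (i := 0)
    (fun _ _ ↦ d2Unit_zpow_mul_mem_rFiltration hq j) hv
  cases g with
  | c1 => exact mul_mem_span_range_rMonomial (i := 0) (fun _ _ ↦ bc1_mul_mem_rFiltration) hv
  | c2 =>
    have h := hc2 1
    rw [zpow_one] at h
    exact h
  | c2i =>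
    have h := hc2 (-1)
    rw [zpow_neg_one] at h
    exact h
  | d1 => exact mul_mem_span_range_rMonomial (i := 1) (fun _ _ ↦ bd1_mul_mem_rFiltration hq) hv
  | d2 =>
    have h := hd2 1
    rw [zpow_one] at h
    exact h
  | d2i =>
    have h := hd2 (-1)
    rw [zpow_neg_one] at h
    exact h
  | r => exact mul_mem_span_range_rMonomial (i := 1) (fun _ _ ↦ br_mul_mem_rFiltration hq) hv
  | w => exact mul_mem_span_range_rMonomial (i := 2) (fun _ _ ↦ bw_mul_mem_rFiltration hq) hv

end RMonomial

section TorusImage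

/-- The exponent of the leading term of the image of `c₁^a c₂^k r^n d₁^b d₂^l` in the quantum
torus. -/
def rLeadingExp (x : RExp) : ChartExp :=
  x.1 • expC1 + (x.2.1 • expC2 + (x.2.2.1 • expR + (x.2.2.2.1 • expD1 + x.2.2.2.2 • expD2)))

theorem rLeadingExp_injective : Function.Injective rLeadingExp := by
  rintro ⟨a, k, n, b, l⟩ ⟨a', k', n', b', l'⟩ h
  simp only [rLeadingExp, expC1, expC2, expR, expD1, expD2, Prod.smul_mk, Prod.mk_add_mk,
    Prod.mk.injEq, nsmul_eq_mul, smul_eq_mul, mul_zero, mul_one, mul_neg, add_zero, zero_add] at h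
  simp only [Prod.mk.injEq]
  omega

variable {R : Type*} [Ring R] [Algebra ℂ R] {T : ChartExp → R} {q : ℂ}

theorem hasLeadingTerm_map_rMonomial (hq : q ≠ 0) (hT : IsQuantumTorus (q ^ 2) chartForm T)
    (Θ : AlgB q →ₐ[ℂ] R) (hc1 : HasLeadingTerm ℂ T chartDeg (Θ (bc1 q)) expC1)
    (hc2 : Θ (bc2 q) = T expC2) (hr : HasLeadingTerm ℂ T chartDeg (Θ (br q)) expR)
    (hd1 : HasLeadingTerm ℂ T chartDeg (Θ (bd1 q)) expD1) (hd2 : Θ (bd2 q) = T expD2)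
    (x : RExp) : HasLeadingTerm ℂ T chartDeg (Θ (rMonomial q x)) (rLeadingExp x) := by
  have hone := hT.apply_zero
  have hmul := hT.exists_apply_mul_apply (pow_ne_zero 2 hq)
  have hunit {u : (AlgB q)ˣ} {e : ChartExp} (hu : Θ u = T e) (k : ℤ) :
      HasLeadingTerm ℂ T chartDeg (Θ ((u ^ k : (AlgB q)ˣ) : AlgB q)) (k • e) := by
    have h := HasLeadingTerm.units_zpow (deg := chartDeg) hone hmul
      (u := Units.map (Θ : AlgB q →* R) u) hu k
    rwa [← map_zpow, Units.coe_map] at h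
  rw [rMonomial, dMonomial]
  simp only [map_mul, map_pow]
  exact (hc1.pow hone hmul _).mul hmul <| (hunit hc2 _).mul hmul <| (hr.pow hone hmul _).mul hmul <|
    (hd1.pow hone hmul _).mul hmul (hunit hd2 _)

theorem linearIndependent_map_rMonomial (hq : q ≠ 0) (hT : IsQuantumTorus (q ^ 2) chartForm T)
    (hli : LinearIndependent ℂ T) (Ψ : AlgB q →ₐ[ℂ] DqLoc q)
    (hc1 : Ψ (bc1 q) = c1El q) (hc2 : Ψ (bc2 q) = detA q) (hd1 : Ψ (bd1 q) = d1El q)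
    (hd2 : Ψ (bd2 q) = detD q) (hr : Ψ (br q) = rEl q) :
    LinearIndependent ℂ (Ψ.toLinearMap ∘ rMonomial q) := by
  refine .of_comp (chartHom hq hT).toLinearMap (HasLeadingTerm.linearIndependent hli
    rLeadingExp_injective
    (hasLeadingTerm_map_rMonomial hq hT ((chartHom hq hT).comp Ψ) ?_ ?_ ?_ ?_ ?_))
  all_goals rw [AlgHom.comp_apply]
  · exact hc1 ▸ hasLeadingTerm_c1El hq hT
  · exact hc2 ▸ chartHom_detA hq hT
  · exact hr ▸ hasLeadingTerm_rEl hq hT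
  · exact hd1 ▸ hasLeadingTerm_d1El hq hT
  · exact hd2 ▸ chartHom_detD hq hT

end TorusImage

/-- The images under `Ψ̄` of the monomials
`c₁^{a₁}c₂^{a₂}r^{ε}d₁^{b₁}d₂^{b₂}w^{c}`, with `a₁, b₁, c ∈ ℕ₀`, `a₂, b₂ ∈ ℤ` and
`ε ∈ {0,1}`, are linearly independent over ℂ in `𝒟q(GL₂)`; in particular the
homomorphism `Ψ̄ : ℬ → 𝒟q(GL₂)` (determined by its prescribed values on the
generators `c₁, c₂, d₁, d₂, r, w`) is injective. -/
theorem stmt18 (q : ℂ) (hq : q ≠ 0) (Ψ : AlgB q →ₐ[ℂ] DqLoc q)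
    (h1 : Ψ (bc1 q) = c1El q) (h2 : Ψ (bc2 q) = detA q)
    (h3 : Ψ (bd1 q) = d1El q) (h4 : Ψ (bd2 q) = detD q)
    (h5 : Ψ (br q) = rEl q) (h6 : Ψ (bw q) = wEl q) :
    LinearIndependent ℂ (fun x => Ψ (pbwB q x)) ∧ Function.Injective Ψ := by
  have hli : LinearIndependent ℂ (Ψ.toLinearMap ∘ rMonomial q) :=
    linearIndependent_map_rMonomial hq
      (isQuantumTorus_torusShift (pow_ne_zero 2 hq) chartForm)
      (linearIndependent_torusShift _ _) Ψ h1 h2 h3 h4 h5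
  have hΨ : Function.Injective Ψ :=
    LinearMap.injective_of_linearIndependent (span_range_rMonomial hq) hli
  have hpbw : LinearIndependent ℂ (pbwB q) :=
    HasLeadingTerm.linearIndependent (.of_comp _ hli) pbwLeadingExp_injective
      (hasLeadingTerm_pbwB hq)
  exact ⟨hpbw.map' Ψ.toLinearMap (LinearMap.ker_eq_bot.2 hΨ), hΨ⟩
end
end
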